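/- For every integer k ≥ 2 and every real 0 < δ ≤ 1 there exist a positive integer Λ₀ and a real Θ₀ with 0 < Θ₀ ≤ δ²/8 (both depending only on k and δ) with the following property. Let L be a nonempty finite subset of ℕ, let A ⊆ [k]^{<ℕ} satisfy dens_{[k]^ℓ}(A) ≥ δ for every ℓ ∈ L, let n ≥ 1 and assume |L| ≥ Λ₀ + ⌈2 Θ₀^{−1} n⌉. Then, setting L₀ to be the set of the first Λ₀ elements of L, either (i) there exist a subset L′ of L ∖ L₀ with |L′| ≥ n and a word t₀ ∈ [k]^{ℓ₀} for some ℓ₀ ∈ L₀ such that dens_{[k]^{ℓ−ℓ₀}}( { s ∈ [k]^{<ℕ} : t₀⌢s ∈ A } ) ≥ δ + δ²/8 for every ℓ ∈ L′, or (ii) there exist a subset L″ of L ∖ L₀ with |L″| ≥ n and a Carlson–Simpson line V of [k]^{<ℕ} contained in A with level set L(V) ⊆ L₀ such that, setting ℓ₁ to be the unique integer with V(1) ⊆ [k]^{ℓ₁}, we have dens_{[k]^{ℓ−ℓ₁}}( { s ∈ [k]^{<ℕ} : t⌢s ∈ A for every t ∈ V(1) } ) ≥ Θ₀/2 for every ℓ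 ∈ L″. -/

import Mathlib

/-- A word over `k`: a finite sequence with values in `[k]`. -/
abbrev Word (k : ℕ) := List (Fin k)

/-- A "possibly variable" letter sequence: `none` plays the role of the variable `v`. -/
abbrev VWord (k : ℕ) := List (Option (Fin k))

/-- Substitution of the letter `a` for every occurrence of the variable. -/
def subst {k : ℕ} (w : VWord k) (a : Fin k) : Word k := w.map (fun o => o.getD a)

/-- `w` is a left variable word: its leftmost letter is the variable `v`. -/
def IsLeftVar {k : ℕ} (w : VWord k) : Prop := w.head? = some none

/-- The density `dens_{[k]^n}(A) = |A ∩ [k]^n| / k^n`. -/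
noncomputable def dens (k n : ℕ) (A : Set (Word k)) : ℝ :=
  (Set.ncard {x ∈ A | x.length = n} : ℝ) / (k : ℝ) ^ n


/-!
The density Carlson–Simpson theorem, with densities averaged over the first `N` levels, is proved by
induction on the alphabet. If it failed after adding a letter, there would be a critical density
`d > 0`. Restricting a nearly critical line-free set to a random subspace gives a random set that
contains each word with probability about `d`, and by the theorem for the old alphabet and
Hales–Jewett type Ramsey theorems, each of many lines over the old letters with some probability at
least `θ > 0`. The new letter extends none of these lines, so the density is larger off this event.
The event is an intersection of sets insensitive to exchanging the new letter with an old one,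
because exchanging two letters in a random block of length `R` has influence `O(1 / √R)`; hence the
increment persists on a subspace, contradicting criticality.

For the dichotomy, if no word of the lower levels has dense extensions at many upper levels, then
the initial segments at a lower level and at an upper level lie jointly in `A` with probability at
least `δ ^ 2 / 2` on average. So for a random word `s` the set of short words `x` in `A` with
`x ⌢ s` in `A` has positive mean density, and the averaged theorem gives a line lying in it with
probability at least `θ`.
-/

namespace CarlsonSimpson

open Finset
open scoped BigOperators

universe u

/-! ### Finitely supported means -/

section Mean

variable {X Y Z ι : Type*} {S : Set X} {T : (X → ℝ) → ℝ}

/-- `T` is the expectation of a finitely supported probability measure carried by `S`. Keeping the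
functional rather than the measure lets random words be composed as iterated expectations. -/
def IsMean (S : Set X) (T : (X → ℝ) → ℝ) : Prop :=
  ∃ (s : Finset X) (w : X → ℝ), ↑s ⊆ S ∧ (∀ x ∈ s, 0 ≤ w x) ∧ ∑ x ∈ s, w x = 1 ∧
    ∀ f, T f = ∑ x ∈ s, w x * f x

theorem IsMean.of_sum (s : Finset ι) (w : ι → ℝ) (p : ι → X) (hp : ∀ i ∈ s, p i ∈ S)
    (hw : ∀ i ∈ s, 0 ≤ w i) (hw1 : ∑ i ∈ s, w i = 1) (hT : ∀ f, T f = ∑ i ∈ s, w i * f (p i)) :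
    IsMean S T := by
  classical
  refine ⟨s.image p, fun x => ∑ i ∈ s with p i = x, w i, ?_, ?_, ?_, fun f => ?_⟩
  · simpa [Set.subset_def] using hp
  · exact fun x _ => sum_nonneg fun i hi => hw i (mem_filter.mp hi).1
  · rw [sum_fiberwise_of_maps_to fun i hi => mem_image_of_mem p hi, hw1]
  · rw [hT, ← sum_fiberwise_of_maps_to fun i hi => mem_image_of_mem p hi]
    refine sum_congr rfl fun x _ => ?_
    rw [sum_mul]
    exact sum_congr rfl fun i hi => by rw [(mem_filter.mp hi).2]

namespace IsMean

theorem add (h : IsMean S T) (f g : X → ℝ) : T (fun x => f x + g x) = T f + T g := by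
  obtain ⟨s, w, -, -, -, hT⟩ := h
  simp only [hT, mul_add, sum_add_distrib]

theorem const_mul (h : IsMean S T) (c : ℝ) (f : X → ℝ) : T (fun x => c * f x) = c * T f := by
  obtain ⟨s, w, -, -, -, hT⟩ := h
  simp only [hT, mul_sum, mul_left_comm]

theorem mul_const (h : IsMean S T) (c : ℝ) (f : X → ℝ) : T (fun x => f x * c) = T f * c := by
  simp only [mul_comm _ c, h.const_mul]

theorem div_const (h : IsMean S T) (c : ℝ) (f : X → ℝ) : T (fun x => f x / c) = T f / c := by
  simp only [div_eq_mul_inv, h.mul_const]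

theorem const (h : IsMean S T) (c : ℝ) : T (fun _ => c) = c := by
  obtain ⟨s, w, -, -, hw, hT⟩ := h
  rw [hT, ← sum_mul, hw, one_mul]

theorem neg (h : IsMean S T) (f : X → ℝ) : T (fun x => -f x) = -T f := by
  simpa using h.const_mul (-1) f

theorem sub (h : IsMean S T) (f g : X → ℝ) : T (fun x => f x - g x) = T f - T g := by
  simp only [sub_eq_add_neg, h.add, h.neg]

theorem sum (h : IsMean S T) (s : Finset ι) (F : ι → X → ℝ) :
    T (fun x => ∑ i ∈ s, F i x) = ∑ i ∈ s, T (F i) := by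
  obtain ⟨t, w, -, -, -, hT⟩ := h
  simp only [hT, mul_sum]
  exact sum_comm

theorem mono (h : IsMean S T) {f g : X → ℝ} (hfg : ∀ x ∈ S, f x ≤ g x) : T f ≤ T g := by
  obtain ⟨s, w, hs, hw, -, hT⟩ := h
  rw [hT, hT]
  exact sum_le_sum fun x hx => mul_le_mul_of_nonneg_left (hfg x (hs hx)) (hw x hx)

theorem congr (h : IsMean S T) {f g : X → ℝ} (hfg : ∀ x ∈ S, f x = g x) : T f = T g :=
  le_antisymm (h.mono fun x hx => (hfg x hx).le) (h.mono fun x hx => (hfg x hx).ge)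

theorem eq_const (h : IsMean S T) {f : X → ℝ} {c : ℝ} (hf : ∀ x ∈ S, f x = c) : T f = c :=
  (h.congr hf).trans (h.const c)

theorem le_const (h : IsMean S T) {f : X → ℝ} {c : ℝ} (hf : ∀ x ∈ S, f x ≤ c) : T f ≤ c :=
  (h.mono hf).trans_eq (h.const c)

theorem const_le (h : IsMean S T) {f : X → ℝ} {c : ℝ} (hf : ∀ x ∈ S, c ≤ f x) : c ≤ T f :=
  (h.const c).symm.trans_le (h.mono hf)

theorem exists_lt (h : IsMean S T) {f : X → ℝ} {c : ℝ} (hc : c < T f) : ∃ x ∈ S, c < f x := by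
  by_contra! hf
  exact hc.not_ge (h.le_const hf)

theorem exists_le (h : IsMean S T) (f : X → ℝ) : ∃ x ∈ S, T f ≤ f x := by
  by_contra! hf
  obtain ⟨s, w, hs, hw, hw1, hT⟩ := h
  obtain ⟨x, hx, hwx⟩ : ∃ x ∈ s, 0 < w x := by
    by_contra! hw'
    linarith [sum_nonpos hw']
  have hlt : ∑ y ∈ s, w y * f y < ∑ y ∈ s, w y * T f :=
    sum_lt_sum (fun y hy => mul_le_mul_of_nonneg_left (hf y (hs hy)).le (hw y hy))
      ⟨x, hx, mul_lt_mul_of_pos_left (hf x (hs hx)) hwx⟩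
  rw [← hT, ← sum_mul, hw1, one_mul] at hlt
  exact lt_irrefl _ hlt

theorem exists_sub_le_and_mul_le (h : IsMean S T) {f g : X → ℝ} {a b c ε : ℝ} (hc : 0 ≤ c)
    (hf : ∀ x ∈ S, f x ≤ b) (hg : ∀ x ∈ S, 0 ≤ g x) (haf : a ≤ T f) (hgε : c * T g ≤ ε) :
    ∃ x ∈ S, a - ε ≤ f x ∧ c * g x ≤ b - (a - ε) := by
  obtain ⟨x, hx, hle⟩ := h.exists_le fun x => f x - c * g x
  rw [h.sub, h.const_mul] at hle
  exact ⟨x, hx, by linarith [mul_nonneg hc (hg x hx)], by linarith [hf x hx]⟩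

theorem abs_le (h : IsMean S T) {f g : X → ℝ} (hf : ∀ x ∈ S, |f x| ≤ g x) : |T f| ≤ T g := by
  rw [_root_.abs_le, ← h.neg]
  exact ⟨h.mono fun x hx => (_root_.abs_le.mp (hf x hx)).1,
    h.mono fun x hx => (_root_.abs_le.mp (hf x hx)).2⟩

theorem sq_le (h : IsMean S T) (f : X → ℝ) : T f ^ 2 ≤ T fun x => f x ^ 2 := by
  have hvar : T (fun x => (f x - T f) ^ 2) = T (fun x => f x ^ 2) - T f ^ 2 := by
    have hexp : ∀ x, (f x - T f) ^ 2 = f x ^ 2 - 2 * T f * f x + T f ^ 2 := fun x => by ring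
    simp only [hexp, h.add, h.sub, h.const_mul, h.const]
    ring
  linarith [h.const_le (f := fun x => (f x - T f) ^ 2) (c := 0) fun x _ => sq_nonneg _]

theorem comm (h : IsMean S T) {S' : Set Y} {T' : (Y → ℝ) → ℝ} (h' : IsMean S' T')
    (F : X → Y → ℝ) : T (fun x => T' (F x)) = T' fun y => T fun x => F x y := by
  obtain ⟨s, w, -, -, -, hT⟩ := h
  simp only [hT, h'.sum, h'.const_mul]

theorem bind (h : IsMean S T) {S' : X → Set Y} {T' : X → (Y → ℝ) → ℝ}
    (h' : ∀ x ∈ S, IsMean (S' x) (T' x)) (g : X → Y → Z) {S'' : Set Z}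
    (hg : ∀ x ∈ S, ∀ y ∈ S' x, g x y ∈ S'') :
    IsMean S'' fun f => T fun x => T' x fun y => f (g x y) := by
  classical
  obtain ⟨s, w, hs, hw, hw1, hT⟩ := h
  have h'' : ∀ x : s, IsMean (S' x) (T' x) := fun x => h' x (hs x.2)
  choose s' w' hs' hw' hw1' hT' using h''
  refine IsMean.of_sum (s.attach.sigma s') (fun i => w i.1 * w' i.1 i.2) (fun i => g i.1 i.2)
    (fun i hi => ?_) (fun i hi => ?_) ?_ fun f => ?_
  · exact hg _ (hs i.1.2) _ (hs' _ (mem_sigma.mp hi).2)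
  · exact mul_nonneg (hw _ i.1.2) (hw' _ _ (mem_sigma.mp hi).2)
  · simp only [sum_sigma, ← mul_sum, hw1', mul_one]
    rw [← hw1, sum_attach s w]
  · rw [hT, ← sum_attach]
    simp only [sum_sigma, hT', mul_sum, mul_assoc]

theorem weaken (h : IsMean S T) {S' : Set X} (hS : S ⊆ S') : IsMean S' T := by
  obtain ⟨s, w, hs, hw⟩ := h
  exact ⟨s, w, hs.trans hS, hw⟩

theorem pure (x : X) : IsMean {x} fun f : X → ℝ => f x :=
  ⟨{x}, 1, by simp, by simp, by simp, by simp⟩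

theorem expect (s : Finset X) (hs : s.Nonempty) :
    IsMean (s : Set X) fun f => 𝔼 x ∈ s, f x := by
  refine ⟨s, fun _ => (#s : ℝ)⁻¹, subset_rfl, fun _ _ => by positivity, ?_, fun f => ?_⟩
  · rw [sum_const, nsmul_eq_mul, mul_inv_cancel₀ (by exact_mod_cast hs.card_pos.ne')]
  · simp only [expect_eq_sum_div_card, inv_mul_eq_div, sum_div]

theorem expect_univ [Fintype X] [Nonempty X] : IsMean (Set.univ : Set X) fun f => 𝔼 x, f x := by
  simpa using expect (univ : Finset X) univ_nonempty

end IsMean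

/-- `E` is a regular conditional expectation of `T` given the value of `Φ`. -/
structure IsDisintegration (T : (X → ℝ) → ℝ) (Φ : X → Z) (E : Z → (X → ℝ) → ℝ) : Prop where
  isMean : ∀ x, IsMean (Φ ⁻¹' {Φ x}) (E (Φ x))
  mean_eq : ∀ F, T F = T fun x => E (Φ x) F

theorem IsMean.exists_disintegration (h : IsMean S T) (Φ : X → Z) :
    ∃ E, IsDisintegration T Φ E := by
  classical
  obtain ⟨s, w, -, hw, -, hT⟩ := h
  let mass (z : Z) : ℝ := ∑ x ∈ s with Φ x = z, w x
  have hmass (z : Z) : ∃ E : (X → ℝ) → ℝ, (z ∈ Set.range Φ → IsMean (Φ ⁻¹' {z}) E) ∧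
      ∀ F, ∑ x ∈ s with Φ x = z, w x * F x = mass z * E F := by
    have hw' : ∀ x ∈ s.filter (Φ · = z), 0 ≤ w x := fun x hx => hw x (mem_filter.mp hx).1
    by_cases h0 : mass z = 0
    · have hzero (F : X → ℝ) : ∑ x ∈ s with Φ x = z, w x * F x = 0 :=
        sum_eq_zero fun x hx => by rw [(sum_eq_zero_iff_of_nonneg hw').mp h0 x hx, zero_mul]
      by_cases hz : z ∈ Set.range Φ
      · obtain ⟨x, rfl⟩ := hz
        exact ⟨fun F => F x, fun _ => (IsMean.pure x).weaken (by simp), by simp [hzero, h0]⟩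
      · exact ⟨0, fun h => absurd h hz, by simp [hzero]⟩
    · refine ⟨fun F => ∑ x ∈ s with Φ x = z, w x / mass z * F x, fun _ => IsMean.of_sum
        (s.filter (Φ · = z)) (fun x => w x / mass z) id (fun x hx => (mem_filter.mp hx).2)
        (fun x hx => div_nonneg (hw' x hx) (sum_nonneg hw')) ?_ fun F => rfl, fun F => ?_⟩
      · rw [← sum_div, div_self h0]
      · simp only [mul_sum, ← mul_assoc, mul_div_cancel₀ _ h0]
  choose E hE hEF using hmass
  refine ⟨E, fun x => hE _ ⟨x, rfl⟩, fun F => ?_⟩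
  have hmaps : ∀ x ∈ s, Φ x ∈ s.image Φ := fun x hx => mem_image_of_mem Φ hx
  rw [hT, hT, ← sum_fiberwise_of_maps_to hmaps, ← sum_fiberwise_of_maps_to hmaps]
  refine sum_congr rfl fun z _ => ?_
  rw [hEF, sum_mul]
  exact sum_congr rfl fun x hx => by rw [(mem_filter.mp hx).2]

theorem IsDisintegration.exists_mean_abs_eq {Φ : X → Z} {E : Z → (X → ℝ) → ℝ}
    (h : IsDisintegration T Φ E) (F : X → ℝ) :
    ∃ ε : Z → ℝ, (∀ z, |ε z| ≤ 1) ∧ T (fun x => |E (Φ x) F|) = T fun x => ε (Φ x) * F x := by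
  refine ⟨fun z => SignType.sign (E z F), fun z => ?_, ?_⟩
  · rcases lt_trichotomy (E z F) 0 with h | h | h <;> simp [h]
  · rw [h.mean_eq fun x => SignType.sign (E (Φ x) F) * F x]
    congr 1
    ext x
    rw [← sign_mul_self, ← (h.isMean x).const_mul]
    exact (h.isMean x).congr fun x' (hx' : Φ x' = Φ x) => by rw [hx']

end Mean

section Iverson

variable {p q : Prop}

open Classical in
/-- The Iverson bracket, used to write densities of sets of words as means of functions. -/
noncomputable def iverson (p : Prop) : ℝ :=
  if p then 1 else 0

theorem iverson_of_true (h : p) : iverson p = 1 :=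
  if_pos h

theorem iverson_of_false (h : ¬p) : iverson p = 0 :=
  if_neg h

theorem iverson_nonneg (p : Prop) : 0 ≤ iverson p := by
  unfold iverson
  split_ifs <;> simp

theorem iverson_le_one (p : Prop) : iverson p ≤ 1 := by
  unfold iverson
  split_ifs <;> simp

theorem iverson_mono (h : p → q) : iverson p ≤ iverson q := by
  by_cases hp : p
  · rw [iverson_of_true hp, iverson_of_true (h hp)]
  · exact (iverson_of_false hp).trans_le (iverson_nonneg q)

theorem iverson_and (p q : Prop) : iverson (p ∧ q) = iverson p * iverson q := by
  unfold iverson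
  split_ifs <;> simp_all

theorem iverson_not (p : Prop) : iverson (¬p) = 1 - iverson p := by
  unfold iverson
  split_ifs <;> simp_all

theorem abs_iverson_mul_le (p : Prop) (x : ℝ) : |iverson p * x| ≤ |x| := by
  rw [abs_mul, abs_of_nonneg (iverson_nonneg p)]
  exact mul_le_of_le_one_left (abs_nonneg x) (iverson_le_one p)

theorem iverson_mul_le_add_mul_iverson (p : Prop) {a b x : ℝ} (ha : 0 ≤ a) (hb : 0 ≤ b)
    (hx : x ≤ b) : iverson p * x ≤ a + b * iverson (a ≤ x) := by
  have h0 := iverson_nonneg p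
  have h1 := iverson_le_one p
  by_cases hax : a ≤ x
  · rw [iverson_of_true hax]
    nlinarith
  · rw [iverson_of_false hax]
    nlinarith

theorem IsMean.sub_le_mul_iverson {X : Type*} {S : Set X} {T : (X → ℝ) → ℝ} (h : IsMean S T)
    {f : X → ℝ} {a b : ℝ} {P : X → Prop} (hf : ∀ x ∈ S, f x ≤ a + b * iverson (P x)) :
    T f - a ≤ b * T fun x => iverson (P x) := by
  have := h.mono hf
  rw [h.add, h.const, h.const_mul] at this
  linarith

theorem of_iverson_pos (h : 0 < iverson p) : p := by
  by_contra hp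
  exact h.ne' (iverson_of_false hp)

end Iverson

/-! ### Means over words -/

section Words

variable {α : Type*} [Fintype α]

/-- The mean of `f` over all words of length `n`. It is defined letter by letter so that it unfolds
along concatenation. -/
noncomputable def wordMean : ℕ → (List α → ℝ) → ℝ
  | 0, f => f []
  | n + 1, f => 𝔼 e, wordMean n fun x => f (e :: x)

/-- The mean of `f` over a uniformly random word of a uniformly random length `ℓ < N`. -/
noncomputable def levelMean (N : ℕ) (f : List α → ℝ) : ℝ :=
  𝔼 ℓ ∈ range N, wordMean ℓ f

theorem wordMean_zero (f : List α → ℝ) : wordMean 0 f = f [] :=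
  rfl

theorem wordMean_succ (n : ℕ) (f : List α → ℝ) :
    wordMean (n + 1) f = 𝔼 e, wordMean n fun x => f (e :: x) :=
  rfl

theorem wordMean_add (m n : ℕ) (f : List α → ℝ) :
    wordMean (m + n) f = wordMean m fun x => wordMean n fun y => f (x ++ y) := by
  induction m generalizing f with
  | zero => simp only [Nat.zero_add, wordMean_zero, List.nil_append]
  | succ m ih => simp only [Nat.succ_add, wordMean_succ, ih, List.cons_append]

theorem levelMean_eq_sum_div (N : ℕ) (f : List α → ℝ) :
    levelMean N f = (∑ ℓ ∈ range N, wordMean ℓ f) / N := by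
  rw [levelMean, expect_eq_sum_div_card, card_range]

variable [Nonempty α]

theorem isMean_wordMean (n : ℕ) : IsMean {x : List α | x.length = n} (wordMean n) := by
  induction n with
  | zero => exact (IsMean.pure []).weaken (by simp)
  | succ n ih =>
    exact IsMean.expect_univ.bind (fun _ _ => ih) List.cons
      fun e _ x (hx : x.length = n) => by simp [hx]

theorem isMean_levelMean {N : ℕ} (hN : 1 ≤ N) :
    IsMean {x : List α | x.length < N} (levelMean N) :=
  (IsMean.expect (range N) (nonempty_range_iff.mpr (by lia))).bind (fun ℓ _ => isMean_wordMean ℓ)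
    (fun _ x => x) fun ℓ hℓ x (hx : x.length = ℓ) => by
      rw [coe_range, Set.mem_Iio] at hℓ
      exact hx.trans_lt hℓ

theorem wordMean_drop (m n : ℕ) (f : List α → ℝ) :
    wordMean (m + n) (fun x => f (x.drop m)) = wordMean n f := by
  rw [wordMean_add]
  refine (isMean_wordMean m).eq_const fun x (hx : x.length = m) => ?_
  simp only [← hx, List.drop_left]

theorem wordMean_take (m n : ℕ) (f : List α → ℝ) :
    wordMean (m + n) (fun x => f (x.take m)) = wordMean m f := by
  rw [wordMean_add]
  refine (isMean_wordMean m).congr fun x (hx : x.length = m) => ?_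
  simp only [← hx, List.take_left, (isMean_wordMean n).const]

theorem le_card_pow_mul_wordMean {f : List α → ℝ} (hf : ∀ x, 0 ≤ f x) (t : List α) :
    f t ≤ (Fintype.card α : ℝ) ^ t.length * wordMean t.length f := by
  induction t generalizing f with
  | nil => simp [wordMean_zero]
  | cons e t ih =>
    have hsum : wordMean t.length (fun x => f (e :: x)) ≤
        Fintype.card α * wordMean (t.length + 1) f := by
      rw [wordMean_succ, ← card_univ, card_mul_expect]
      exact single_le_sum (f := fun e => wordMean t.length fun x => f (e :: x))
        (fun e _ => (isMean_wordMean _).const_le fun x _ => hf _) (mem_univ e)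
    calc f (e :: t)
        ≤ (Fintype.card α : ℝ) ^ t.length * wordMean t.length (fun x => f (e :: x)) :=
          ih fun x => hf _
      _ ≤ (Fintype.card α : ℝ) ^ t.length * (Fintype.card α * wordMean (t.length + 1) f) := by
          gcongr
      _ = (Fintype.card α : ℝ) ^ (e :: t).length * wordMean (e :: t).length f := by
          rw [List.length_cons, pow_succ, mul_assoc]

variable (α) in
theorem exists_le_mul_levelMean (s : ℕ) : ∃ C : ℝ, 0 < C ∧ ∀ f : List α → ℝ, (∀ x, 0 ≤ f x) →
    ∀ t : List α, t.length < s → f t ≤ C * levelMean s f := by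
  have hcard : (1 : ℝ) ≤ Fintype.card α := by exact_mod_cast Fintype.card_pos
  refine ⟨Fintype.card α ^ s * (s + 1), by positivity, fun f hf t ht => ?_⟩
  have hmean (ℓ : ℕ) : 0 ≤ wordMean ℓ f := (isMean_wordMean ℓ).const_le fun x _ => hf x
  have hs : (s : ℝ) ≠ 0 := by
    have : s ≠ 0 := by lia
    exact_mod_cast this
  calc f t ≤ (Fintype.card α : ℝ) ^ t.length * wordMean t.length f :=
        le_card_pow_mul_wordMean hf t
    _ ≤ (Fintype.card α : ℝ) ^ s * ∑ ℓ ∈ range s, wordMean ℓ f := by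
        gcongr
        · exact hmean _
        · exact single_le_sum (fun ℓ _ => hmean ℓ) (mem_range.mpr ht)
    _ = (Fintype.card α : ℝ) ^ s * (s * levelMean s f) := by
        rw [levelMean_eq_sum_div, mul_div_cancel₀ _ hs]
    _ ≤ (Fintype.card α : ℝ) ^ s * ((s + 1) * levelMean s f) := by
        have : 0 ≤ levelMean s f := expect_nonneg fun ℓ _ => hmean ℓ
        gcongr
        linarith
    _ = Fintype.card α ^ s * (s + 1) * levelMean s f := by ring

theorem levelMean_mul (q R : ℕ) (f : List α → ℝ) :
    levelMean (q * R) f =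
      𝔼 j ∈ range q, wordMean (j * R) fun x => levelMean R fun y => f (x ++ y) := by
  have hsplit : ∑ ℓ ∈ range (q * R), wordMean ℓ f =
      ∑ j ∈ range q, ∑ r ∈ range R, wordMean (j * R + r) f := by
    induction q with
    | zero => simp
    | succ q ih => rw [sum_range_succ, ← ih, Nat.succ_mul, sum_range_add]
  simp only [levelMean_eq_sum_div, expect_eq_sum_div_card, card_range, hsplit,
    (isMean_wordMean _).div_const, (isMean_wordMean _).sum, ← wordMean_add, ← sum_div]
  rw [div_div, Nat.cast_mul, mul_comm (q : ℝ)]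

theorem exists_levelMean_mul_le {q : ℕ} (hq : 1 ≤ q) (R : ℕ) (f : List α → ℝ) :
    ∃ x : List α, x.length + R ≤ q * R ∧ levelMean (q * R) f ≤ levelMean R fun y => f (x ++ y) := by
  rw [levelMean_mul]
  obtain ⟨j, hjq, hj⟩ := (IsMean.expect (range q) (nonempty_range_iff.mpr (by lia))).exists_le
    fun j => wordMean (j * R) fun x => levelMean R fun y => f (x ++ y)
  obtain ⟨x, hxj, hx⟩ :=
    (isMean_wordMean (j * R)).exists_le fun x => levelMean R fun y => f (x ++ y)
  refine ⟨x, ?_, hj.trans hx⟩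
  rw [show x.length = j * R from hxj, ← Nat.succ_mul]
  exact Nat.mul_le_mul_right R (by simpa using hjq)

end Words

/-! ### Lines and subspaces of words -/

section Lines

variable {α : Type*} {A B : Set (List α)} {c : List α} {w : List (Option α)} {a : α}

/-- The word obtained from the variable word `w` by substituting `a` for the variable `none`. -/
def substVar (w : List (Option α)) (a : α) : List α :=
  w.map fun o => o.getD a

theorem length_substVar : (substVar w a).length = w.length :=
  List.length_map _

/-- The points `c ⌢ a ⌢ w(a)` of the upper level of a Carlson–Simpson line. The leading variable of
the left variable word is split off, so `w` is an arbitrary word with variables. -/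
def linePoint (c : List α) (w : List (Option α)) (a : α) : List α :=
  c ++ a :: substVar w a

theorem length_linePoint : (linePoint c w a).length = c.length + (w.length + 1) := by
  rw [linePoint, List.length_append, List.length_cons, length_substVar]

theorem substVar_append_none_cons (c : List α) (w : List (Option α)) (a : α) :
    substVar (c.map some ++ none :: w) a = linePoint c w a := by
  simp [substVar, linePoint, Function.comp_def]

theorem map_some_append_none_cons_inj {c c' : List α} {w w' : List (Option α)} :
    c.map some ++ none :: w = c'.map some ++ none :: w' ↔ c = c' ∧ w = w' := by
  induction c generalizing c' with
  | nil => cases c' <;> simp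
  | cons a c ih => cases c' <;> simp [ih, and_assoc]

/-- The Carlson–Simpson line with bottom `c` and left variable word `none :: w` lies in `A`. -/
def LineIn (c : List α) (w : List (Option α)) (A : Set (List α)) : Prop :=
  c ∈ A ∧ ∀ a, linePoint c w a ∈ A

/-- `A` contains a Carlson–Simpson line. -/
def HasLine (A : Set (List α)) : Prop :=
  ∃ c w, LineIn c w A

theorem HasLine.mono (h : HasLine A) (hAB : A ⊆ B) : HasLine B := by
  obtain ⟨c, w, hc, hw⟩ := h
  exact ⟨c, w, hAB hc, fun a => hAB (hw a)⟩

end Lines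

/-- A strong subspace of words with constants in `C`: a copy `eval` of the tree of words over every
alphabet `β` in which the constants are interpreted, natural in `β` and branching exactly at the
first letter that is added. It encodes variable words with infinitely many variables through their
substitution maps. -/
structure WordSubspace (C : Type u) where
  /-- Substitution of the letters of a word for the variables. -/
  eval : ∀ {β : Type u}, (C → β) → List β → List β
  map_eval : ∀ {β γ : Type u} (f : β → γ) (g : C → β) (x : List β),
    (eval g x).map f = eval (fun c => f (g c)) (x.map f)
  eval_append_cons : ∀ {β : Type u} (g : C → β) (x : List β) (e : β) (t : List β),
    ∃ s, eval g (x ++ e :: t) = eval g x ++ e :: s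

namespace WordSubspace

variable {C C' β γ : Type u}

theorem length_eval_eq (V : WordSubspace C) (g : C → β) (g' : C → γ) {x : List β} {y : List γ}
    (h : x.length = y.length) : (V.eval g x).length = (V.eval g' y).length := by
  have hx := congrArg List.length (V.map_eval (fun _ => PUnit.unit) g x)
  have hy := congrArg List.length (V.map_eval (fun _ => PUnit.unit) g' y)
  rw [List.length_map] at hx hy
  rw [hx, hy, List.map_const', List.map_const', h]

theorem substVar_eval (V : WordSubspace C) (g : C → Option β) (x : List (Option β)) (a : β) :
    substVar (V.eval g x) a = V.eval (fun c => (g c).getD a) (substVar x a) :=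
  V.map_eval _ _ _

theorem exists_eval_append_none_cons (V : WordSubspace C) (c : List C) (w : List (Option C)) :
    ∃ s, V.eval some (c.map some ++ none :: w) = (V.eval id c).map some ++ none :: s ∧
      ∀ a, V.eval id (linePoint c w a) = linePoint (V.eval id c) s a := by
  obtain ⟨s, hs⟩ := V.eval_append_cons some (c.map some) none w
  have hc : V.eval some (c.map some) = (V.eval id c).map some := (V.map_eval some id c).symm
  rw [hc] at hs
  refine ⟨s, hs, fun a => ?_⟩
  rw [← substVar_append_none_cons, ← substVar_append_none_cons, ← hs, V.substVar_eval]
  rfl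

theorem hasLine_of_preimage (V : WordSubspace C) {A : Set (List C)}
    (h : HasLine {t | V.eval id t ∈ A}) : HasLine A := by
  obtain ⟨c, w, hc, hw⟩ := h
  obtain ⟨s, -, hs⟩ := V.exists_eval_append_none_cons c w
  exact ⟨V.eval id c, s, hc, fun a => hs a ▸ hw a⟩

/-- The whole tree of words. -/
protected def id : WordSubspace C where
  eval _ x := x
  map_eval _ _ _ := rfl
  eval_append_cons _ _ _ t := ⟨t, rfl⟩

/-- The image in `V` of the subspace `W`. -/
def comp (V W : WordSubspace C) : WordSubspace C where
  eval g x := V.eval g (W.eval g x)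
  map_eval f g x := by rw [V.map_eval, W.map_eval]
  eval_append_cons g x e t := by
    obtain ⟨s, hs⟩ := W.eval_append_cons g x e t
    rw [hs]
    exact V.eval_append_cons g _ e s

/-- The subspace obtained by renaming the constants of `V` along `h`. -/
def mapConst (h : C → C') (V : WordSubspace C) : WordSubspace C' where
  eval g x := V.eval (fun c => g (h c)) x
  map_eval f g x := by rw [V.map_eval]
  eval_append_cons _ x e t := V.eval_append_cons _ x e t

/-- The tree of all words that extend `y`. -/
def shift (y : List C) : WordSubspace C where
  eval g x := y.map g ++ x
  map_eval f g x := by simp [Function.comp_def]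
  eval_append_cons g x e t := ⟨t, by simp⟩

/-- The subspace with bottom `c` that continues, above the letter `e` chosen there, along `V`, in
which `e` interprets the additional constant `none`. -/
def cons (c : List C) (V : WordSubspace (Option C)) : WordSubspace C where
  eval g
    | [] => c.map g
    | e :: t => c.map g ++ e :: V.eval (fun o => o.elim e g) t
  map_eval f g
    | [] => by simp [Function.comp_def]
    | e :: t => by
      have helim : (fun o : Option C => f (o.elim e g)) = fun o => o.elim (f e) fun c => f (g c) :=
        funext fun o => by cases o <;> rfl
      simp [V.map_eval, Function.comp_def, helim]
  eval_append_cons g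
    | [], _, _ => ⟨_, rfl⟩
    | e :: x, e', t => by
      obtain ⟨s, hs⟩ := V.eval_append_cons (fun o => o.elim e g) x e' t
      exact ⟨s, by simp [hs]⟩

/-- The subspace whose first two levels form the Carlson–Simpson line with bottom `c` and left
variable word `none :: w`, continued above its upper level by `V`. -/
def consLine (c : List C) (w : List (Option C)) (V : WordSubspace C) : WordSubspace C :=
  cons c ((shift w).comp (V.mapConst some))

theorem consLine_eval_nil (c : List C) (w : List (Option C)) (V : WordSubspace C) :
    (consLine c w V).eval id [] = c :=
  List.map_id c

theorem consLine_eval_cons (c : List C) (w : List (Option C)) (V : WordSubspace C) (e : C)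
    (t : List C) : (consLine c w V).eval id (e :: t) = linePoint c w e ++ V.eval id t := by
  have helim : (fun o : Option C => o.elim e id) = fun o => o.getD e :=
    funext fun o => by cases o <;> rfl
  simp only [consLine, cons, comp, shift, mapConst, linePoint, substVar, helim, List.map_id,
    List.append_assoc, List.cons_append]
  rfl

end WordSubspace

section Blocks

variable {β γ : Type u}

/-- Substitution of the letters of a word for the gaps of the list of blocks `u ⌢ · ⌢ v`. -/
def substBlocks : List (List β × List β) → List β → List β
  | [], x => x
  | (u, _) :: _, [] => u
  | (u, v) :: W, e :: t => u ++ e :: (v ++ substBlocks W t)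

/-- The list of blocks obtained by applying `f` to every letter. -/
def mapBlocks (f : β → γ) (W : List (List β × List β)) : List (List γ × List γ) :=
  W.map (Prod.map (List.map f) (List.map f))

theorem map_substBlocks (f : β → γ) (W : List (List β × List β)) (x : List β) :
    (substBlocks W x).map f = substBlocks (mapBlocks f W) (x.map f) := by
  induction W generalizing x with
  | nil => rfl
  | cons p W ih => cases x <;> simp [substBlocks, mapBlocks, ih]

/-- The subspace with substitution map `substBlocks W`. -/
def WordSubspace.ofBlocks : List (List β × List β) → WordSubspace β
  | [] => .id
  | (u, v) :: W => .consLine u (v.map some) (ofBlocks W)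

theorem WordSubspace.ofBlocks_eval_id (W : List (List β × List β)) (x : List β) :
    (ofBlocks W).eval id x = substBlocks W x := by
  induction W generalizing x with
  | nil => rfl
  | cons p W ih =>
    cases x with
    | nil => exact consLine_eval_nil _ _ _
    | cons e t =>
      rw [ofBlocks, consLine_eval_cons, ih]
      simp [linePoint, substVar, substBlocks, Function.comp_def]

theorem HasLine.of_append {A : Set (List β)} (y : List β) (h : HasLine {t | y ++ t ∈ A}) :
    HasLine A :=
  (WordSubspace.shift y).hasLine_of_preimage (by simpa [WordSubspace.shift] using h)

end Blocks

/-! ### Random blocks and influences -/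

section RandomBlocks

variable {β : Type u} [Fintype β]

/-- The mean of `F (u, v)` over a random block of length `R`: a uniformly random word of length `R`
is cut into `u` and `v` by deleting the letter at a uniformly random position. -/
noncomputable def blockMean (R : ℕ) (F : List β × List β → ℝ) : ℝ :=
  𝔼 i ∈ range R, wordMean i fun u => wordMean (R - 1 - i) fun v => F (u, v)

/-- The mean of `F` over `s` independent random blocks of length `R`. -/
noncomputable def blocksMean (R : ℕ) : ℕ → (List (List β × List β) → ℝ) → ℝ
  | 0, F => F []
  | s + 1, F => blockMean R fun p => blocksMean R s fun W => F (p :: W)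

variable [Nonempty β] {R : ℕ}

theorem isMean_blockMean (hR : 1 ≤ R) : IsMean Set.univ (blockMean (β := β) R) :=
  (IsMean.expect (range R) (nonempty_range_iff.mpr (by lia))).bind (S' := fun _ => Set.univ)
    (fun i _ => (isMean_wordMean i).bind (fun _ _ => isMean_wordMean (R - 1 - i)) Prod.mk
      fun _ _ _ _ => Set.mem_univ _) (fun _ p => p) fun _ _ _ _ => Set.mem_univ _

theorem isMean_blocksMean (hR : 1 ≤ R) (s : ℕ) :
    IsMean {W : List (List β × List β) | W.length = s} (blocksMean R s) := by
  induction s with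
  | zero => exact (IsMean.pure []).weaken (by simp)
  | succ s ih =>
    exact (isMean_blockMean hR).bind (fun _ _ => ih) List.cons
      fun p _ W (hW : W.length = s) => by simp [hW]

theorem succ_mul_blockMean_succ (R : ℕ) (F : List β × List β → ℝ) :
    (R + 1) * blockMean (R + 1) F =
      wordMean R (fun v => F ([], v)) + R * 𝔼 e, blockMean R fun p => F (e :: p.1, p.2) := by
  have hsum (R : ℕ) (F : List β × List β → ℝ) : R * blockMean R F =
      ∑ i ∈ range R, wordMean i fun u => wordMean (R - 1 - i) fun v => F (u, v) := by
    rw [blockMean, ← card_mul_expect, card_range]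
  have hhead := hsum (R + 1) F
  push_cast at hhead
  rw [hhead, mul_expect, sum_range_succ', add_comm]
  simp only [hsum R, IsMean.expect_univ.sum, wordMean_zero, wordMean_succ]
  simp only [Nat.sub_zero, Nat.sub_sub, add_comm]

theorem blockMean_fst (R : ℕ) (f : List β → ℝ) : (blockMean R fun p => f p.1) = levelMean R f := by
  simp only [blockMean, (isMean_wordMean _).const, levelMean]

theorem expect_blockMean_append (hR : 1 ≤ R) (f : List β → ℝ) :
    𝔼 e, blockMean R (fun p => f (p.1 ++ e :: p.2)) = wordMean R f := by
  rw [IsMean.expect_univ.comm (isMean_blockMean hR) fun e p => f (p.1 ++ e :: p.2)]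
  refine (IsMean.expect (range R) (nonempty_range_iff.mpr (by lia))).eq_const fun i hi => ?_
  have hlen : R = i + (R - 1 - i + 1) := by
    have : i < R := by simpa using hi
    lia
  conv_rhs => rw [hlen, wordMean_add]
  simp only [wordMean_succ, IsMean.expect_univ.comm (isMean_wordMean _)]

theorem wordMean_blocksMean (hR : 1 ≤ R) {s i : ℕ} (hi : i < s) (f : List β → ℝ) :
    wordMean i (fun t => blocksMean R s fun W => f (substBlocks W t)) =
      wordMean (i * R) fun x => levelMean R fun y => f (x ++ y) := by
  induction i generalizing s f with
  | zero =>
    obtain ⟨s, rfl⟩ := Nat.exists_eq_succ_of_ne_zero (by lia : s ≠ 0)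
    simp only [Nat.zero_mul, wordMean_zero, List.nil_append, blocksMean, substBlocks,
      (isMean_blocksMean hR s).const, blockMean_fst]
  | succ i ih =>
    obtain ⟨s, rfl⟩ := Nat.exists_eq_succ_of_ne_zero (by lia : s ≠ 0)
    have htail (z : List β) : wordMean i (fun t => blocksMean R s fun W =>
        f (z ++ substBlocks W t)) =
          wordMean (i * R) fun x => levelMean R fun y => f (z ++ (x ++ y)) :=
      ih (by lia) fun x => f (z ++ x)
    have hassoc (u v : List β) (e : β) (x : List β) : u ++ e :: (v ++ x) = (u ++ e :: v) ++ x := by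
      simp
    simp only [wordMean_succ, blocksMean, substBlocks, hassoc,
      (isMean_wordMean i).comm (isMean_blockMean hR), htail]
    rw [expect_blockMean_append hR fun z => wordMean (i * R) fun x =>
      levelMean R fun y => f (z ++ (x ++ y)), Nat.succ_mul, add_comm (i * R), wordMean_add]
    simp only [List.append_assoc]

theorem blocksMean_levelMean (hR : 1 ≤ R) (s : ℕ) (f : List β → ℝ) :
    blocksMean R s (fun W => levelMean s fun t => f (substBlocks W t)) = levelMean (s * R) f := by
  rw [levelMean_mul]
  simp only [levelMean, expect_eq_sum_div_card, (isMean_blocksMean hR s).div_const,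
    (isMean_blocksMean hR s).sum]
  congr 1
  refine sum_congr rfl fun i hi => ?_
  rw [(isMean_blocksMean hR s).comm (isMean_wordMean i), wordMean_blocksMean hR (mem_range.mp hi)]
  simp only [levelMean, expect_eq_sum_div_card]

end RandomBlocks

section LetterSign

variable {β : Type u} {a b : β}

/-- The signed measure `1_a - 1_b` on letters. -/
noncomputable def letterSign (a b e : β) : ℝ :=
  iverson (e = a) - iverson (e = b)

theorem sum_mul_letterSign [Fintype β] (h : β → ℝ) : ∑ e, h e * letterSign a b e = h a - h b := by
  classical
  simp [letterSign, iverson, mul_sub]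

theorem letterSign_sq_le_one (e : β) : letterSign a b e ^ 2 ≤ 1 := by
  unfold letterSign iverson
  split_ifs <;> norm_num

end LetterSign

section Influence

variable {β γ : Type u} [Fintype β] [Nonempty β] (π : β → γ) {a b : β} {R : ℕ} {B : ℝ}

/-- The sum of `ε (π u) (π v) * letterSign a b e` over all splittings `u ⌢ e ⌢ v` of a word. Means
of products with it are the influences of exchanging `a` and `b` at a random position. -/
noncomputable def signSum (a b : β) : (List γ → List γ → ℝ) → List β → ℝ
  | _, [] => 0
  | ε, e :: x => ε [] (x.map π) * letterSign a b e + signSum a b (fun p q => ε (π e :: p) q) x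

theorem mul_blockMean_sub_eq (R : ℕ) (ε : List γ → List γ → ℝ) (g : List β → ℝ) :
    (R : ℝ) * blockMean R (fun p => ε (p.1.map π) (p.2.map π) *
      (g (p.1 ++ a :: p.2) - g (p.1 ++ b :: p.2))) =
      Fintype.card β * wordMean R fun x => g x * signSum π a b ε x := by
  induction R generalizing ε g with
  | zero => simp [signSum, wordMean_zero]
  | succ R ih =>
    have hcard (h : β → ℝ) : (Fintype.card β : ℝ) * 𝔼 e, h e = ∑ e, h e := by
      rw [← card_univ, card_mul_expect]
    have hhead : Fintype.card β * 𝔼 e, wordMean R (fun x =>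
        g (e :: x) * (ε [] (x.map π) * letterSign a b e)) =
        wordMean R fun x => ε [] (x.map π) * (g (a :: x) - g (b :: x)) := by
      have hpull (e : β) : wordMean R (fun x => g (e :: x) * (ε [] (x.map π) * letterSign a b e)) =
          wordMean R (fun x => ε [] (x.map π) * g (e :: x)) * letterSign a b e := by
        rw [← (isMean_wordMean R).mul_const]
        congr 1
        ext x
        ring
      simp only [hcard, hpull, sum_mul_letterSign, ← (isMean_wordMean R).sub, mul_sub]
    have htail (e : β) := ih (fun p q => ε (π e :: p) q) fun x => g (e :: x)
    push_cast
    simp only [succ_mul_blockMean_succ, List.map_nil, List.nil_append, List.map_cons,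
      List.cons_append, ← IsMean.expect_univ.const_mul, htail]
    simp only [wordMean_succ, signSum, mul_add, (isMean_wordMean R).add, IsMean.expect_univ.add,
      IsMean.expect_univ.const_mul, hhead]

theorem wordMean_signSum_sq_le (hπ : π a = π b) (R : ℕ) {ε : List γ → List γ → ℝ}
    (hε : ∀ p q, |ε p q| ≤ 1) : wordMean R (fun x => signSum π a b ε x ^ 2) ≤ R := by
  induction R generalizing ε with
  | zero => simp [signSum, wordMean_zero]
  | succ R ih =>
    let tail (e : β) (x : List β) : ℝ := signSum π a b (fun p q => ε (π e :: p) q) x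
    let cross (e : β) (x : List β) : ℝ := 2 * (ε [] (x.map π) * tail e x)
    have hpoint (e : β) (x : List β) : signSum π a b ε (e :: x) ^ 2 ≤
        tail e x ^ 2 + 1 + cross e x * letterSign a b e := by
      have hsq : (ε [] (x.map π) * letterSign a b e) ^ 2 ≤ 1 := by
        rw [mul_pow]
        exact mul_le_one₀ ((sq_le_one_iff_abs_le_one _).mpr (hε _ _)) (sq_nonneg _)
          (letterSign_sq_le_one e)
      simp only [signSum, cross, tail]
      nlinarith
    have hcross : 𝔼 e, wordMean R (cross e) * letterSign a b e = 0 := by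
      rw [expect_eq_sum_div_card, sum_mul_letterSign]
      simp [cross, tail, hπ]
    calc wordMean (R + 1) (fun x => signSum π a b ε x ^ 2)
        ≤ 𝔼 e, wordMean R fun x => tail e x ^ 2 + 1 + cross e x * letterSign a b e :=
          IsMean.expect_univ.mono fun e _ => (isMean_wordMean R).mono fun x _ => hpoint e x
      _ = 𝔼 e, (wordMean R (fun x => tail e x ^ 2) + 1) := by
          simp only [(isMean_wordMean R).add, (isMean_wordMean R).mul_const,
            (isMean_wordMean R).const, IsMean.expect_univ.add, hcross, add_zero]
      _ ≤ (R + 1 : ℕ) := by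
          push_cast
          exact IsMean.expect_univ.le_const fun e _ => by linarith [ih fun p q => hε (π e :: p) q]

theorem abs_blockMean_sub_le (hπ : π a = π b) (hR : 1 ≤ R) {ε : List γ → List γ → ℝ}
    (hε : ∀ p q, |ε p q| ≤ 1) {g : List β → ℝ} (hg : ∀ x, |g x| ≤ B) :
    |blockMean R fun p => ε (p.1.map π) (p.2.map π) *
      (g (p.1 ++ a :: p.2) - g (p.1 ++ b :: p.2))| ≤ Fintype.card β * B / √R := by
  have hR0 : (0 : ℝ) < R := by exact_mod_cast hR
  have hsqrt : 0 < √(R : ℝ) := Real.sqrt_pos.mpr hR0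
  have hB : 0 ≤ B := (abs_nonneg _).trans (hg [])
  have hcs : |wordMean R fun x => g x * signSum π a b ε x| ≤ B * √R := by
    refine abs_le_of_sq_le_sq ?_ (by positivity)
    calc (wordMean R fun x => g x * signSum π a b ε x) ^ 2
        ≤ wordMean R fun x => (g x * signSum π a b ε x) ^ 2 := (isMean_wordMean R).sq_le _
      _ ≤ wordMean R fun x => B ^ 2 * signSum π a b ε x ^ 2 :=
          (isMean_wordMean R).mono fun x _ => by
            rw [mul_pow]
            exact mul_le_mul_of_nonneg_right (sq_le_sq' (abs_le.mp (hg x)).1 (abs_le.mp (hg x)).2)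
              (sq_nonneg _)
      _ ≤ B ^ 2 * R := by
          rw [(isMean_wordMean R).const_mul]
          exact mul_le_mul_of_nonneg_left (wordMean_signSum_sq_le π hπ R hε) (sq_nonneg _)
      _ = (B * √R) ^ 2 := by rw [mul_pow, Real.sq_sqrt hR0.le]
  have hscaled := congrArg abs (mul_blockMean_sub_eq (a := a) (b := b) π R ε g)
  rw [abs_mul, abs_mul, abs_of_pos hR0, Nat.abs_cast] at hscaled
  rw [le_div_iff₀ hsqrt, ← mul_le_mul_iff_of_pos_right hsqrt, mul_assoc, Real.mul_self_sqrt hR0.le,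
    mul_comm, hscaled, mul_assoc]
  exact mul_le_mul_of_nonneg_left hcs (Nat.cast_nonneg _)

theorem abs_blocksMean_sub_le (hR : 1 ≤ R) {s : ℕ} {ε : List (List γ × List γ) → ℝ}
    (hε : ∀ W, |ε W| ≤ 1) {f : List β → ℝ} (hf : ∀ x, |f x| ≤ B) {t t' : List β}
    (ht : t.map π = t'.map π) (hs : t.length < s) :
    |blocksMean R s fun W => ε (mapBlocks π W) * (f (substBlocks W t) - f (substBlocks W t'))| ≤
      t.length * (Fintype.card β * B / √R) := by
  induction t generalizing s t' ε f with
  | nil =>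
    obtain rfl : t' = [] := by simpa using ht.symm
    simp [(isMean_blocksMean hR s).const]
  | cons a t ih =>
    obtain ⟨b, t', rfl, hab, htt'⟩ := List.map_eq_cons_iff.mp ht.symm
    obtain ⟨s, rfl⟩ := Nat.exists_eq_succ_of_ne_zero (by lia : s ≠ 0)
    have htail : |blocksMean R (s + 1) fun W => ε (mapBlocks π W) *
        (f (substBlocks W (a :: t)) - f (substBlocks W (a :: t')))| ≤
        t.length * (Fintype.card β * B / √R) :=
      ((isMean_blockMean hR).abs_le fun p _ =>
        ih (fun W => hε ((p.1.map π, p.2.map π) :: W)) (f := fun x => f (p.1 ++ a :: (p.2 ++ x)))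
          (fun _ => hf _) htt'.symm (by simpa using hs)).trans_eq ((isMean_blockMean hR).const _)
    have hhead : |blocksMean R (s + 1) fun W => ε (mapBlocks π W) *
        (f (substBlocks W (a :: t')) - f (substBlocks W (b :: t')))| ≤
        Fintype.card β * B / √R := by
      rw [blocksMean, (isMean_blockMean hR).comm (isMean_blocksMean hR s)]
      refine ((isMean_blocksMean hR s).abs_le fun W _ => ?_).trans_eq
        ((isMean_blocksMean hR s).const _)
      have := abs_blockMean_sub_le π hab.symm hR (ε := fun p q => ε ((p, q) :: mapBlocks π W))
        (fun _ _ => hε _) (g := fun z => f (z ++ substBlocks W t')) fun _ => hf _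
      simpa only [substBlocks, mapBlocks, List.map_cons, Prod.map, List.append_assoc,
        List.cons_append] using this
    calc |blocksMean R (s + 1) fun W => ε (mapBlocks π W) *
          (f (substBlocks W (a :: t)) - f (substBlocks W (b :: t')))|
        = |(blocksMean R (s + 1) fun W => ε (mapBlocks π W) *
            (f (substBlocks W (a :: t)) - f (substBlocks W (a :: t')))) +
          blocksMean R (s + 1) fun W => ε (mapBlocks π W) *
            (f (substBlocks W (a :: t')) - f (substBlocks W (b :: t')))| := by
          rw [← (isMean_blocksMean hR (s + 1)).add]
          simp only [← mul_add, sub_add_sub_cancel]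
      _ ≤ t.length * (Fintype.card β * B / √R) + Fintype.card β * B / √R :=
          (abs_add_le _ _).trans (add_le_add htail hhead)
      _ = (a :: t).length * (Fintype.card β * B / √R) := by
          push_cast [List.length_cons]
          ring

theorem IsDisintegration.mean_abs_sub_le {s : ℕ}
    {E : List (List γ × List γ) → (List (List β × List β) → ℝ) → ℝ}
    (hE : IsDisintegration (blocksMean R s) (mapBlocks π) E) (hR : 1 ≤ R)
    {f : List β → ℝ} (hf : ∀ x, |f x| ≤ B) {t t' : List β} (ht : t.map π = t'.map π)
    (hs : t.length < s) :
    blocksMean R s (fun W => |E (mapBlocks π W) fun W' =>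
      f (substBlocks W' t) - f (substBlocks W' t')|) ≤ t.length * (Fintype.card β * B / √R) := by
  obtain ⟨ε, hε, hεE⟩ :=
    hE.exists_mean_abs_eq fun W' => f (substBlocks W' t) - f (substBlocks W' t')
  rw [hεE]
  exact (le_abs_self _).trans (abs_blocksMean_sub_le π hR hε hf ht hs)

end Influence

/-! ### Lines common to random sets -/

/-- The density Carlson–Simpson theorem over the alphabet `α`, in the weak form in which the density
is averaged over the first `N` levels. -/
def DensityLineProperty (α : Type u) [Fintype α] : Prop :=
  ∀ δ : ℝ, 0 < δ → ∃ N, 1 ≤ N ∧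
    ∀ A : Set (List α), (δ ≤ levelMean N fun x => iverson (x ∈ A)) → HasLine A

section CommonLine

variable {α : Type u} [Fintype α] [Nonempty α]

theorem DensityLineProperty.exists_lineIn_length_lt (h : DensityLineProperty α) {δ : ℝ}
    (hδ : 0 < δ) : ∃ N, 1 ≤ N ∧ ∀ A : Set (List α), (δ ≤ levelMean N fun x => iverson (x ∈ A)) →
      ∃ c w, LineIn c w A ∧ c.length + (w.length + 1) < N := by
  obtain ⟨N, hN, hline⟩ := h δ hδ
  refine ⟨N, hN, fun A hA => ?_⟩
  have hA' : δ ≤ levelMean N fun x => iverson (x ∈ A ∩ {x | x.length < N}) :=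
    hA.trans ((isMean_levelMean hN).mono fun x hx => iverson_mono fun h => ⟨h, hx⟩)
  obtain ⟨c, w, hc, hw⟩ := hline _ hA'
  refine ⟨c, w, ⟨hc.1, fun a => (hw a).1⟩, ?_⟩
  simpa only [Set.mem_ofPred_eq, length_linePoint] using (hw (Classical.arbitrary α)).2

theorem IsMean.exists_le_iverson {X ι : Type*} {S : Set X} {T : (X → ℝ) → ℝ} (h : IsMean S T)
    (s : Finset ι) (P : ι → X → Prop) {f : X → ℝ} {η : ℝ} (hη : 0 < η) (hf : ∀ x ∈ S, f x ≤ 1)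
    (hP : ∀ x ∈ S, η ≤ f x → ∃ i ∈ s, P i x) (hT : 2 * η ≤ T f) :
    ∃ i ∈ s, η / #s ≤ T fun x => iverson (P i x) := by
  have hcover : T f ≤ η + ∑ i ∈ s, T fun x => iverson (P i x) := by
    rw [← h.sum, ← h.const η, ← h.add]
    refine h.mono fun x hx => ?_
    have hnonneg : ∀ i ∈ s, 0 ≤ iverson (P i x) := fun i _ => iverson_nonneg _
    rcases le_total η (f x) with hηf | hfη
    · obtain ⟨i, hi, hPi⟩ := hP x hx hηf
      have := single_le_sum hnonneg hi
      rw [iverson_of_true hPi] at this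
      linarith [hf x hx]
    · linarith [sum_nonneg hnonneg]
  have hs : s.Nonempty := by
    rw [nonempty_iff_ne_empty]
    rintro rfl
    rw [sum_empty] at hcover
    linarith
  refine exists_le_of_sum_le hs ?_
  rw [sum_const, nsmul_eq_mul, mul_div_cancel₀ _ (by exact_mod_cast hs.card_pos.ne')]
  linarith

theorem DensityLineProperty.exists_common_line (h : DensityLineProperty α) {η : ℝ} (hη : 0 < η) :
    ∃ M, 1 ≤ M ∧ ∃ θ : ℝ, 0 < θ ∧ ∀ {X : Type u} {S : Set X} {T : (X → ℝ) → ℝ}, IsMean S T →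
      ∀ B : X → Set (List α), (η ≤ T fun x => levelMean M fun t => iverson (t ∈ B x)) →
        ∃ c w, c.length + (w.length + 1) < M ∧ θ ≤ T fun x => iverson (LineIn c w (B x)) := by
  obtain ⟨M, hM, hline⟩ := h.exists_lineIn_length_lt (half_pos hη)
  have hfin := (List.finite_length_lt α M).prod (List.finite_length_lt (Option α) M)
  let s := hfin.toFinset.filter fun q => q.1.length + (q.2.length + 1) < M
  refine ⟨M, hM, η / 2 / (#s + 1), by positivity, fun {X S T} hT B hB => ?_⟩
  obtain ⟨⟨c, w⟩, hcw, hθ⟩ := hT.exists_le_iverson s (fun q x => LineIn q.1 q.2 (B x))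
    (f := fun x => levelMean M fun t => iverson (t ∈ B x)) (half_pos hη)
    (fun x _ => (isMean_levelMean hM).le_const fun t _ => iverson_le_one _)
    (fun x _ hx => by
      obtain ⟨c, w, hcw, hlen⟩ := hline (B x) hx
      refine ⟨(c, w), mem_filter.mpr ⟨hfin.mem_toFinset.mpr ⟨?_, ?_⟩, hlen⟩, hcw⟩
      · exact (Nat.le_add_right _ _).trans_lt hlen
      · exact show w.length < M by lia)
    (by linarith)
  refine ⟨c, w, (mem_filter.mp hcw).2, hθ.trans' ?_⟩
  have : (0 : ℝ) < #s := by exact_mod_cast card_pos.mpr ⟨_, hcw⟩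
  gcongr
  linarith

end CommonLine

section Levels

variable {β : Type u} [Fintype β] [Nonempty β]

theorem wordMean_add_add_one (m n : ℕ) (f : List β → ℝ) :
    wordMean (m + (n + 1)) f = wordMean m fun z => wordMean n fun x => 𝔼 e, f (z ++ e :: x) := by
  simp only [wordMean_add, wordMean_succ, IsMean.expect_univ.comm (isMean_wordMean _)]

theorem exists_subspace_sum_wordMean_le (L : Finset ℕ) (p : ℕ) (hp : ∀ ℓ ∈ L, p ≤ ℓ)
    (f : List β → ℝ) : ∃ V : WordSubspace β,
      (∀ t : List β, t.length < #L → p + (V.eval id t).length ∈ L) ∧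
        ∑ ℓ ∈ L, wordMean (ℓ - p) f ≤ ∑ i ∈ range #L, wordMean i fun t => f (V.eval id t) := by
  induction L using Finset.induction_on_min generalizing p f with
  | empty => exact ⟨.id, by simp, by simp⟩
  | insert a L haL ih =>
    have ha : a ∉ L := fun h => lt_irrefl a (haL a h)
    have hpa : p ≤ a := hp a (mem_insert_self a L)
    let next (z x : List β) : ℝ := 𝔼 e, f (z ++ e :: x)
    have hnext : ∀ ℓ ∈ L, wordMean (ℓ - p) f =
        wordMean (a - p) fun z => wordMean (ℓ - (a + 1)) (next z) := fun ℓ hℓ => by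
      have := haL ℓ hℓ
      rw [← wordMean_add_add_one, show a - p + (ℓ - (a + 1) + 1) = ℓ - p by lia]
    obtain ⟨z, hz, hfz⟩ := (isMean_wordMean (a - p)).exists_le fun z =>
      f z + ∑ ℓ ∈ L, wordMean (ℓ - (a + 1)) (next z)
    obtain ⟨V, hV, hsum⟩ := ih (a + 1) haL (next z)
    refine ⟨.consLine z [] V, fun t ht => ?_, ?_⟩
    · rw [card_insert_of_notMem ha] at ht
      cases t with
      | nil =>
        rw [WordSubspace.consLine_eval_nil, show z.length = a - p from hz, Nat.add_sub_cancel' hpa]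
        exact mem_insert_self a L
      | cons e t =>
        refine mem_insert_of_mem ?_
        convert hV t (by simpa using ht) using 1
        rw [WordSubspace.consLine_eval_cons, List.length_append, length_linePoint,
          show z.length = a - p from hz, List.length_nil]
        lia
    · have htail (i : ℕ) : wordMean (i + 1) (fun t => f ((WordSubspace.consLine z [] V).eval id t))
          = wordMean i fun t => next z (V.eval id t) := by
        simp only [wordMean_succ, WordSubspace.consLine_eval_cons, linePoint, List.append_assoc,
          List.cons_append, substVar, List.map_nil, List.nil_append,
          IsMean.expect_univ.comm (isMean_wordMean _), next]
      rw [sum_insert ha, sum_congr rfl hnext, card_insert_of_notMem ha, sum_range_succ', add_comm]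
      simp only [htail, wordMean_zero, WordSubspace.consLine_eval_nil]
      rw [← (isMean_wordMean _).sum, add_comm, ← (isMean_wordMean _).add]
      linarith

theorem exists_subspace_expect_le (L : Finset ℕ) (f : List β → ℝ) : ∃ V : WordSubspace β,
    (∀ t : List β, t.length < #L → (V.eval id t).length ∈ L) ∧
      𝔼 ℓ ∈ L, wordMean ℓ f ≤ levelMean #L fun t => f (V.eval id t) := by
  obtain ⟨V, hV, hsum⟩ := exists_subspace_sum_wordMean_le L 0 (fun _ _ => Nat.zero_le _) f
  refine ⟨V, by simpa using hV, ?_⟩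
  rw [levelMean_eq_sum_div, expect_eq_sum_div_card]
  simpa using div_le_div_of_nonneg_right hsum (Nat.cast_nonneg _)

theorem exists_subspace_expect_le_of_dvd {L : Finset ℕ} (hL : L.Nonempty) {M : ℕ} (hM : M ∣ #L)
    (f : List β → ℝ) : ∃ V : WordSubspace β,
      (∀ t : List β, t.length < M → (V.eval id t).length ∈ L) ∧
        𝔼 ℓ ∈ L, wordMean ℓ f ≤ levelMean M fun t => f (V.eval id t) := by
  obtain ⟨q, hq⟩ := hM
  rw [mul_comm] at hq
  obtain ⟨V, hV, hfV⟩ := exists_subspace_expect_le L f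
  rw [hq] at hV hfV
  have hq1 : 1 ≤ q := Nat.pos_of_ne_zero fun h0 => hL.card_pos.ne' (by rw [hq, h0, zero_mul])
  obtain ⟨y, hy, hfy⟩ := exists_levelMean_mul_le hq1 M fun t => f (V.eval id t)
  have heval (t : List β) : (V.comp (.shift y)).eval id t = V.eval id (y ++ t) := by
    simp [WordSubspace.comp, WordSubspace.shift]
  refine ⟨V.comp (.shift y), fun t ht => ?_, ?_⟩
  · rw [heval]
    refine hV _ ?_
    rw [List.length_append]
    lia
  · simpa only [heval] using hfV.trans hfy

end Levels

/-! ### Ramsey theory of word subspaces -/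

section HalesJewett

variable {C : Type u}

namespace WordSubspace

variable {V W : WordSubspace C} {m m' n n' : ℕ}

/-- Substituting fewer than `m` letters in `V` yields words of length less than `n`. -/
def LengthLT (V : WordSubspace C) (m n : ℕ) : Prop :=
  ∀ ⦃β : Type u⦄ (g : C → β) (x : List β), x.length < m → (V.eval g x).length < n

theorem lengthLT_of_eval_id [Nonempty C]
    (h : ∀ t : List C, t.length < m → (V.eval id t).length < n) : V.LengthLT m n := by
  intro β g x hx
  rw [V.length_eval_eq g id (y := List.replicate x.length (Classical.arbitrary C)) (by simp)]
  exact h _ (by simpa using hx)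

theorem LengthLT.mono (h : V.LengthLT m n) (hm : m' ≤ m) (hn : n ≤ n') : V.LengthLT m' n' :=
  fun _ g x hx => (h g x (hx.trans_le hm)).trans_le hn

theorem LengthLT.comp {k : ℕ} (hV : V.LengthLT n k) (hW : W.LengthLT m n) :
    (V.comp W).LengthLT m k :=
  fun _ g x hx => hV g _ (hW g x hx)

theorem LengthLT.shift_comp (hV : V.LengthLT m n) (a : C) :
    ((shift [a]).comp V).LengthLT m (n + 1) :=
  fun _ g x hx => by simpa [WordSubspace.comp, shift] using hV g x hx

theorem LengthLT.mapConst {C' : Type u} (hV : V.LengthLT m n) (h : C → C') :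
    (V.mapConst h).LengthLT m n :=
  fun _ g => hV fun c => g (h c)

theorem LengthLT.cons_nil {V : WordSubspace (Option C)} (hV : V.LengthLT m n) :
    (cons [] V).LengthLT (m + 1) (n + 1) := by
  intro β g x hx
  cases x with
  | nil => exact Nat.succ_pos n
  | cons e t => simpa [cons] using hV (fun o => o.elim e g) t (by simpa using hx)

end WordSubspace

theorem exists_map_some_append_none_cons {x : List (Option C)} (hx : none ∈ x) :
    ∃ (c : List C) (w : List (Option C)), x = c.map some ++ none :: w := by
  induction x with
  | nil => simp at hx
  | cons o x ih =>
    cases o with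
    | none => exact ⟨[], x, rfl⟩
    | some a =>
      obtain ⟨c, w, rfl⟩ := ih (by simpa using hx)
      exact ⟨a :: c, w, rfl⟩

theorem exists_linePoint_monochromatic (β κ : Type*) [Finite β] [Finite κ] :
    ∃ n, ∀ χ : List β → κ, ∃ (c : List β) (w : List (Option β)), c.length + (w.length + 1) = n ∧
      ∀ a b, χ (linePoint c w a) = χ (linePoint c w b) := by
  obtain ⟨ι, hι, hline⟩ := Combinatorics.Line.exists_mono_in_high_dimension β κ
  let e := Fintype.equivFin ι
  refine ⟨Fintype.card ι, fun χ => ?_⟩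
  obtain ⟨l, y, hl⟩ := hline fun x => χ (List.ofFn fun i => x (e.symm i))
  obtain ⟨i, hi⟩ := l.proper
  obtain ⟨c, w, hcw⟩ := exists_map_some_append_none_cons
    (x := List.ofFn fun i => l.idxFun (e.symm i)) (List.mem_ofFn.mpr ⟨e i, by simp [hi]⟩)
  have hpoint (a : β) : linePoint c w a = List.ofFn fun i => l a (e.symm i) := by
    rw [← substVar_append_none_cons, ← hcw, substVar, List.map_ofFn]
    rfl
  refine ⟨c, w, by simpa using (congrArg List.length hcw).symm, fun a b => ?_⟩
  rw [hpoint, hpoint]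
  exact (hl a).trans (hl b).symm

section Monochromatic

variable (β : Type u) [Finite β] [Nonempty β] (κ : Type*) [Finite κ]

theorem exists_subspace_monochromatic_levels (m : ℕ) : ∃ n, ∀ χ : List β → κ,
    ∃ V : WordSubspace β, V.LengthLT m n ∧
      ∀ t t' : List β, t.length < m → t.length = t'.length →
        χ (V.eval id t) = χ (V.eval id t') := by
  induction m with
  | zero =>
    exact ⟨0, fun χ => ⟨.id, fun _ _ _ h => absurd h (by simp), fun _ _ h => absurd h (by simp)⟩⟩
  | succ m ih =>
    obtain ⟨n, hn⟩ := ih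
    have : Finite {z : List β // z.length < n} := (List.finite_length_lt β n).to_subtype
    obtain ⟨H, hH⟩ := exists_linePoint_monochromatic β ({z : List β // z.length < n} → κ)
    refine ⟨H + n + 1, fun χ => ?_⟩
    obtain ⟨c, w, hlen, hχ⟩ := hH fun y z => χ (y ++ z)
    let b : β := Classical.arbitrary β
    obtain ⟨V, hV, hlev⟩ := hn fun z => χ (linePoint c w b ++ z)
    have hfirst (e : β) {t : List β} (ht : t.length < m) :
        χ ((WordSubspace.consLine c w V).eval id (e :: t)) =
          χ (linePoint c w b ++ V.eval id t) := by
      rw [WordSubspace.consLine_eval_cons]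
      exact congrFun (hχ e b) ⟨V.eval id t, hV id t ht⟩
    refine ⟨.consLine c w V, WordSubspace.lengthLT_of_eval_id fun t ht => ?_,
      fun t t' ht htt' => ?_⟩
    · cases t with
      | nil =>
        rw [WordSubspace.consLine_eval_nil]
        lia
      | cons e t =>
        have := hV id t (by simpa using ht)
        rw [WordSubspace.consLine_eval_cons, List.length_append, length_linePoint]
        lia
    · match t, t', htt' with
      | [], [], _ => rfl
      | e :: t, e' :: t', htt' =>
        have ht : t.length < m := by simpa using ht
        have htt' : t.length = t'.length := by simpa using htt'
        rw [hfirst e ht, hfirst e' (htt' ▸ ht)]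
        exact hlev t t' ht htt'

theorem exists_subspace_monochromatic (m : ℕ) : ∃ n, ∀ χ : List β → κ,
    ∃ V : WordSubspace β, V.LengthLT m n ∧
      ∀ t t' : List β, t.length < m → t'.length < m → χ (V.eval id t) = χ (V.eval id t') := by
  classical
  have := Fintype.ofFinite β
  have := Fintype.ofFinite κ
  obtain ⟨n, hn⟩ := exists_subspace_monochromatic_levels β κ (Fintype.card κ * m + 1)
  refine ⟨n, fun χ => ?_⟩
  obtain ⟨V, hV, hlev⟩ := hn χ
  let color (i : ℕ) : κ := χ (V.eval id (List.replicate i (Classical.arbitrary β)))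
  obtain ⟨y, -, hy⟩ := exists_lt_card_fiber_of_mul_lt_card_of_maps_to
    (s := range (Fintype.card κ * m + 1)) (t := univ) (f := color) (n := m)
    (fun _ _ => mem_univ _) (by simp)
  obtain ⟨W, hW, -⟩ := exists_subspace_expect_le (β := β)
    {i ∈ range (Fintype.card κ * m + 1) | color i = y} 0
  have hWlev {t : List β} (ht : t.length < m) :
      (W.eval id t).length < Fintype.card κ * m + 1 ∧ color (W.eval id t).length = y := by
    simpa using hW t (ht.trans hy)
  have hcolor {t : List β} (ht : t.length < m) : χ (V.eval id (W.eval id t)) = y :=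
    (hlev _ _ (hWlev ht).1 (by simp)).trans (hWlev ht).2
  exact ⟨V.comp W, hV.comp (WordSubspace.lengthLT_of_eval_id fun t ht => (hWlev ht).1),
    fun t t' ht ht' => (hcolor ht).trans (hcolor ht').symm⟩

end Monochromatic

theorem exists_subspace_captures_or_avoids (α : Type u) [Finite α] (m M : ℕ) :
    ∀ (F : Type u) [Finite F], ∃ n, ∀ G : F → Set (List (Option α)), ∃ φ : WordSubspace α,
      (φ.LengthLT (m + 1) n ∧
        ∃ f, ∀ z : List (Option α), z.length < m → φ.eval some (none :: z) ∈ G f) ∨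
      (φ.LengthLT M n ∧
        ∀ f, ∀ x : List (Option α), x.length < M → none ∈ x → φ.eval some x ∉ G f) := by
  induction M with
  | zero => exact fun F _ => ⟨0, fun G => ⟨.id, .inr ⟨fun _ _ _ h => absurd h (by simp),
      fun _ _ h => absurd h (by simp)⟩⟩⟩
  | succ M ih =>
    intro F _
    obtain ⟨n', hn'⟩ := ih (F × α)
    obtain ⟨n, hn⟩ := exists_subspace_monochromatic (Option α) (F → Prop) (max m n' + 1)
    refine ⟨n + 1, fun G => ?_⟩
    obtain ⟨V, hV, hmono⟩ := hn fun z f => none :: z ∈ G f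
    have hVn' : V.LengthLT n' n := hV.mono (by lia) le_rfl
    have hnone : (fun o : Option α => o.elim none some) = id :=
      funext fun o => by cases o <;> rfl
    by_cases hG : ∃ f, none :: V.eval id [] ∈ G f
    · obtain ⟨f, hf⟩ := hG
      refine ⟨.cons [] V, .inl ⟨(hV.mono (by lia) le_rfl).cons_nil, f, fun z hz => ?_⟩⟩
      have hz' := congrFun (hmono z [] (by lia) (by simp)) f
      change none :: V.eval (fun o => o.elim none some) z ∈ G f
      rwa [hnone, hz']
    obtain ⟨φ, ⟨hφ, ⟨f, a⟩, hfa⟩ | ⟨hφ, havoid⟩⟩ := hn' fun fa =>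
      {x | some fa.2 :: V.eval (fun o => o.elim (some fa.2) some) x ∈ G fa.1}
    · have hsome : (fun o : Option α => o.elim (some a) some) = fun o => some (o.getD a) :=
        funext fun o => by cases o <;> rfl
      refine ⟨(WordSubspace.shift [a]).comp ((V.mapConst fun o => o.getD a).comp φ),
        .inl ⟨((hVn'.mapConst _).comp hφ).shift_comp a, f, fun z hz => ?_⟩⟩
      have := hfa z hz
      rwa [Set.mem_ofPred_eq, hsome] at this
    · refine ⟨.cons [] (V.comp (φ.mapConst some)),
        .inr ⟨(hVn'.comp (hφ.mapConst _)).cons_nil, fun f x hx hnx => ?_⟩⟩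
      match x, hx, hnx with
      | none :: t, hx, _ =>
        have ht := hφ some t (by simpa using hx)
        have ht' := congrFun (hmono (φ.eval some t) [] (by lia) (by simp)) f
        change none :: V.eval (fun o => o.elim none some) (φ.eval some t) ∉ G f
        rw [hnone, ht']
        exact fun h => hG ⟨f, h⟩
      | some a :: t, hx, hnx =>
        exact havoid (f, a) t (by simpa using hx) (by simpa using hnx)

end HalesJewett

/-! ### Pairs of levels -/

theorem exists_two_lt_sq_mul {δ : ℝ} (hδ : 0 < δ) : ∃ q : ℕ, 1 ≤ q ∧ 2 < δ ^ 2 * q := by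
  obtain ⟨q, hq⟩ := exists_nat_gt (2 / δ ^ 2)
  refine ⟨q, ?_, (div_lt_iff₀' (by positivity)).mp hq⟩
  exact Nat.cast_pos.mp (lt_trans (by positivity : 0 < 2 / δ ^ 2) hq)

theorem IsMean.exists_lt_le_mul {X : Type*} {S : Set X} {T : (X → ℝ) → ℝ} (h : IsMean S T)
    {a : ℕ → X → ℝ} (ha0 : ∀ i x, 0 ≤ a i x) (ha1 : ∀ i x, a i x ≤ 1) {δ : ℝ} (hδ : 0 ≤ δ) {q : ℕ}
    (hq : 2 < δ ^ 2 * q) (hmean : δ ≤ 𝔼 i ∈ range q, T (a i)) :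
    ∃ i j, i < j ∧ j < q ∧ δ ^ 2 / 2 ≤ T fun x => a i x * a j x := by
  by_contra! hlt
  have hpair (i j : ℕ) (hi : i ∈ range q) (hj : j ∈ range q) :
      T (fun x => a i x * a j x) ≤ (if i = j then 1 else 0) + δ ^ 2 / 2 := by
    rw [mem_range] at hi hj
    rcases lt_trichotomy i j with hij | rfl | hij
    · simpa [hij.ne] using (hlt i j hij hj).le
    · have : T (fun x => a i x * a i x) ≤ 1 :=
        h.le_const fun x _ => mul_le_one₀ (ha1 i x) (ha0 i x) (ha1 i x)
      simp only [if_pos]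
      linarith [sq_nonneg δ]
    · simpa only [mul_comm, hij.ne', if_false, zero_add] using (hlt j i hij hi).le
  have hsum : δ * q ≤ T fun x => ∑ i ∈ range q, a i x := by
    rw [h.sum, ← card_mul_expect, card_range, mul_comm]
    exact mul_le_mul_of_nonneg_left hmean (Nat.cast_nonneg _)
  have hbound : (δ * q) ^ 2 ≤ q + q * (q * (δ ^ 2 / 2)) :=
    calc (δ * q) ^ 2 ≤ (T fun x => ∑ i ∈ range q, a i x) ^ 2 := by gcongr
      _ ≤ T fun x => (∑ i ∈ range q, a i x) ^ 2 := h.sq_le _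
      _ = ∑ i ∈ range q, ∑ j ∈ range q, T fun x => a i x * a j x := by
          simp only [sq, sum_mul_sum, h.sum]
      _ ≤ ∑ i ∈ range q, ∑ j ∈ range q, ((if i = j then 1 else 0) + δ ^ 2 / 2) :=
          sum_le_sum fun i hi => sum_le_sum fun j hj => hpair i j hi hj
      _ = q + q * (q * (δ ^ 2 / 2)) := by
          simp only [sum_add_distrib, sum_ite_eq, sum_const, sum_ite_mem, inter_self, card_range,
            nsmul_eq_mul, mul_one]
  have hq0 : (0 : ℝ) < q := pos_of_mul_pos_right (two_pos.trans hq) (sq_nonneg δ)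
  linarith [mul_lt_mul_of_pos_right hq hq0]

section Pairs

variable {α : Type u}

/-- The common extensions of the upper level of a Carlson–Simpson line into `A`. -/
def commonExt (A : Set (List α)) (c : List α) (w : List (Option α)) : Set (List α) :=
  {s | ∀ a, linePoint c w a ++ s ∈ A}

variable [Fintype α]

/-- The probability that the initial segments of lengths `ℓ₀` and `ℓ₁` of a random word both lie in
`A`, for `ℓ₀ ≤ ℓ₁`. -/
noncomputable def pairCorr (A : Set (List α)) (ℓ₀ ℓ₁ : ℕ) : ℝ :=
  wordMean ℓ₀ fun x => wordMean (ℓ₁ - ℓ₀) fun y => iverson (x ∈ A ∧ x ++ y ∈ A)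

variable [Nonempty α]

theorem pairCorr_eq_wordMean {A : Set (List α)} {ℓ₀ ℓ₁ N : ℕ} (h₀ : ℓ₀ ≤ ℓ₁) (h₁ : ℓ₁ ≤ N) :
    pairCorr A ℓ₀ ℓ₁ = wordMean N fun x => iverson (x.take ℓ₀ ∈ A ∧ x.take ℓ₁ ∈ A) := by
  obtain ⟨m, rfl⟩ := Nat.exists_eq_add_of_le h₀
  obtain ⟨n, rfl⟩ := Nat.exists_eq_add_of_le h₁
  calc pairCorr A ℓ₀ (ℓ₀ + m)
      = wordMean (ℓ₀ + m) fun x => iverson (x.take ℓ₀ ∈ A ∧ x ∈ A) := by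
        rw [wordMean_add, pairCorr, Nat.add_sub_cancel_left]
        refine (isMean_wordMean ℓ₀).congr fun x (hx : x.length = ℓ₀) => ?_
        simp only [← hx, List.take_left]
    _ = wordMean (ℓ₀ + m + n) fun x =>
          iverson ((x.take (ℓ₀ + m)).take ℓ₀ ∈ A ∧ x.take (ℓ₀ + m) ∈ A) :=
        (wordMean_take _ _ fun x => iverson (x.take ℓ₀ ∈ A ∧ x ∈ A)).symm
    _ = _ := by simp only [List.take_take, min_eq_left h₀]

theorem isMean_expect_wordMean {L : Finset ℕ} (hL : L.Nonempty) :
    IsMean {x : List α | x.length ∈ L} fun f => 𝔼 ℓ ∈ L, wordMean ℓ f :=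
  (IsMean.expect L hL).bind (fun ℓ _ => isMean_wordMean ℓ) (fun _ x => x)
    fun ℓ hℓ x (hx : x.length = ℓ) => by simpa [hx] using hℓ

theorem expect_Ico_wordMean_sub {p k K : ℕ} (hkp : k ≤ p) (hK : 1 ≤ K) (f : List α → ℝ) :
    𝔼 ℓ ∈ Ico p (p + K), wordMean (ℓ - k) f =
      wordMean (p - k) fun x => levelMean K fun y => f (x ++ y) := by
  have hshift : 𝔼 ℓ ∈ Ico p (p + K), wordMean (ℓ - k) f =
      𝔼 i ∈ range K, wordMean (p - k + i) f := by
    simp only [expect_eq_sum_div_card, sum_Ico_eq_sum_range, Nat.card_Ico, Nat.add_sub_cancel_left,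
      card_range, Nat.sub_add_comm hkp]
  rw [hshift]
  simp only [wordMean_add]
  exact (IsMean.expect (range K) (nonempty_range_iff.mpr (by lia))).comm (isMean_wordMean _) _

theorem expect_pairCorr_eq {L₀ L₁ : Finset ℕ} (hL₁ : L₁.Nonempty)
    (hle : ∀ ℓ₀ ∈ L₀, ∀ ℓ₁ ∈ L₁, ℓ₀ ≤ ℓ₁) {A : Set (List α)} :
    𝔼 ℓ₁ ∈ L₁, 𝔼 ℓ₀ ∈ L₀, pairCorr A ℓ₀ ℓ₁ = 𝔼 ℓ₀ ∈ L₀, wordMean ℓ₀ fun p =>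
      𝔼 ℓ₁ ∈ L₁, wordMean ℓ₁ fun x => iverson (p ∈ A ∧ p ++ x.drop p.length ∈ A) := by
  rw [expect_comm]
  refine expect_congr rfl fun ℓ₀ h₀ => ?_
  rw [(isMean_wordMean ℓ₀).comm (IsMean.expect L₁ hL₁)]
  refine expect_congr rfl fun ℓ₁ h₁ =>
    (isMean_wordMean ℓ₀).congr fun p (hp : p.length = ℓ₀) => ?_
  rw [← wordMean_drop ℓ₀ (ℓ₁ - ℓ₀), Nat.add_sub_cancel' (hle _ h₀ _ h₁), ← hp]

theorem DensityLineProperty.exists_lineIn_of_le_pairCorr (h : DensityLineProperty α) {η : ℝ}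
    (hη : 0 < η) : ∃ M, 1 ≤ M ∧ ∃ θ : ℝ, 0 < θ ∧ ∀ {L₀ L₁ : Finset ℕ}, L₀.Nonempty → M ∣ #L₀ →
      L₁.Nonempty → (∀ ℓ₀ ∈ L₀, ∀ ℓ₁ ∈ L₁, ℓ₀ ≤ ℓ₁) → ∀ {A : Set (List α)},
      (η ≤ 𝔼 ℓ₁ ∈ L₁, 𝔼 ℓ₀ ∈ L₀, pairCorr A ℓ₀ ℓ₁) →
      ∃ c w, LineIn c w A ∧ c.length ∈ L₀ ∧ c.length + (w.length + 1) ∈ L₀ ∧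
        θ ≤ 𝔼 ℓ ∈ L₁, wordMean (ℓ - (c.length + (w.length + 1))) fun s =>
          iverson (s ∈ commonExt A c w) := by
  obtain ⟨M, hM, θ, hθ, hline⟩ := h.exists_common_line hη
  refine ⟨M, hM, θ, hθ, fun {L₀ L₁} hL₀ hML₀ hL₁ hle A hA => ?_⟩
  let T (F : List α → ℝ) : ℝ := 𝔼 ℓ ∈ L₁, wordMean ℓ F
  have hT : IsMean {x | x.length ∈ L₁} T := isMean_expect_wordMean hL₁
  let G (x p : List α) : Prop := p ∈ A ∧ p ++ x.drop p.length ∈ A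
  obtain ⟨V, hV, hfV⟩ :=
    exists_subspace_expect_le_of_dvd hL₀ hML₀ fun p => T fun x => iverson (G x p)
  rw [← expect_pairCorr_eq hL₁ hle, ← hT.comm (isMean_levelMean hM)] at hfV
  obtain ⟨c, w, hlen, hcw⟩ := hline hT (fun x => {t | G x (V.eval id t)}) (hA.trans hfV)
  obtain ⟨s, -, hs⟩ := V.exists_eval_append_none_cons c w
  have hlevel (a : α) : (linePoint (V.eval id c) s a).length ∈ L₀ :=
    hs a ▸ hV _ (by rwa [length_linePoint])
  simp only [length_linePoint] at hlevel
  obtain ⟨x, -, hx⟩ := hT.exists_lt (hθ.trans_le hcw)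
  have hx : LineIn c w {t | G x (V.eval id t)} := of_iverson_pos hx
  have hlen' := hlevel (Classical.arbitrary α)
  refine ⟨V.eval id c, s, ⟨hx.1.1, fun a => hs a ▸ (hx.2 a).1⟩, hV c (by lia), hlen',
    hcw.trans (expect_le_expect fun ℓ hℓ => ?_)⟩
  rw [← wordMean_drop ((V.eval id c).length + (s.length + 1)) (ℓ - _) fun y =>
    iverson (y ∈ commonExt A (V.eval id c) s), Nat.add_sub_cancel' (hle _ hlen' ℓ hℓ)]
  refine (isMean_wordMean ℓ).mono fun x _ => iverson_mono fun h a => ?_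
  have ha := (h.2 a).2
  rwa [hs, length_linePoint] at ha

theorem exists_Ico_le_pairCorr {q K : ℕ} (hK : 1 ≤ K) {Q : Set (List α)} {δ : ℝ} (hδ : 0 ≤ δ)
    (hq : 2 < δ ^ 2 * q) (hQ : δ ≤ levelMean (q * K) fun x => iverson (x ∈ Q)) :
    ∃ i j, i < j ∧ δ ^ 2 / 2 ≤ 𝔼 ℓ₁ ∈ Ico (j * K) (j * K + K), 𝔼 ℓ₀ ∈ Ico (i * K) (i * K + K),
      pairCorr Q ℓ₀ ℓ₁ := by
  let I (i : ℕ) : Finset ℕ := Ico (i * K) (i * K + K)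
  let a (i : ℕ) (x : List α) : ℝ := 𝔼 ℓ ∈ I i, iverson (x.take ℓ ∈ Q)
  have hI (i : ℕ) : IsMean (I i : Set ℕ) fun f => 𝔼 ℓ ∈ I i, f ℓ :=
    IsMean.expect _ (nonempty_Ico.mpr (by lia))
  have hword := isMean_wordMean (α := α) (q * K)
  have hlt {i j ℓ : ℕ} (hij : i < j) (hℓ : ℓ ∈ I i) : ℓ < j * K :=
    (mem_Ico.mp hℓ).2.trans_le (Nat.succ_mul i K ▸ Nat.mul_le_mul_right K hij)
  have hmean {i : ℕ} (hi : i < q) : wordMean (q * K) (a i) =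
      wordMean (i * K) fun x => levelMean K fun y => iverson (x ++ y ∈ Q) := by
    have hwindow := expect_Ico_wordMean_sub (Nat.zero_le (i * K)) hK
      fun x : List α => iverson (x ∈ Q)
    simp only [Nat.sub_zero] at hwindow
    rw [← hwindow, ← (hI i).comm hword]
    refine expect_congr rfl fun ℓ hℓ => ?_
    rw [← wordMean_take ℓ (q * K - ℓ), Nat.add_sub_cancel' (hlt hi hℓ).le]
  obtain ⟨i, j, hij, hjq, hcorr⟩ := hword.exists_lt_le_mul (a := a)
    (fun i x => expect_nonneg fun _ _ => iverson_nonneg _)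
    (fun i x => (hI i).le_const fun _ _ => iverson_le_one _) hδ hq (by
      rw [levelMean_mul] at hQ
      exact hQ.trans_eq (expect_congr rfl fun i hi => (hmean (mem_range.mp hi)).symm))
  refine ⟨i, j, hij, hcorr.trans_eq ?_⟩
  calc wordMean (q * K) (fun x => a i x * a j x)
      = wordMean (q * K) fun x => 𝔼 ℓ₁ ∈ I j, 𝔼 ℓ₀ ∈ I i,
          iverson (x.take ℓ₀ ∈ Q ∧ x.take ℓ₁ ∈ Q) := by
        simp only [a, iverson_and, mul_expect, expect_mul]
    _ = 𝔼 ℓ₁ ∈ I j, 𝔼 ℓ₀ ∈ I i, wordMean (q * K) fun x =>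
          iverson (x.take ℓ₀ ∈ Q ∧ x.take ℓ₁ ∈ Q) := by
        simp only [(hI _).comm hword]
    _ = 𝔼 ℓ₁ ∈ I j, 𝔼 ℓ₀ ∈ I i, pairCorr Q ℓ₀ ℓ₁ :=
        expect_congr rfl fun ℓ₁ h₁ => expect_congr rfl fun ℓ₀ h₀ =>
          (pairCorr_eq_wordMean ((hlt hij h₀).le.trans (mem_Ico.mp h₁).1) (hlt hjq h₁).le).symm

theorem DensityLineProperty.exists_subspace (h : DensityLineProperty α) (m : ℕ) {δ : ℝ}
    (hδ : 0 < δ) : ∃ N, 1 ≤ N ∧ ∀ Q : Set (List α), δ ≤ levelMean N (fun x => iverson (x ∈ Q)) →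
      ∃ V : WordSubspace α, ∀ t, t.length < m → V.eval id t ∈ Q := by
  induction m generalizing δ with
  | zero => exact ⟨1, le_rfl, fun Q _ => ⟨.id, fun t ht => absurd ht (by lia)⟩⟩
  | succ m ih =>
    obtain ⟨M, hM, θ, hθ, hline⟩ := h.exists_lineIn_of_le_pairCorr (η := δ ^ 2 / 2) (by positivity)
    obtain ⟨N, hN, hsub⟩ := ih hθ
    obtain ⟨q, hq0, hq⟩ := exists_two_lt_sq_mul hδ
    have hK : 1 ≤ M * N := Nat.mul_pos hM hN
    refine ⟨q * (M * N), Nat.mul_pos hq0 hK, fun Q hQ => ?_⟩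
    obtain ⟨i, j, hij, hcorr⟩ := exists_Ico_le_pairCorr hK hδ.le hq hQ
    have hsucc : i * (M * N) + M * N ≤ j * (M * N) :=
      Nat.succ_mul i _ ▸ Nat.mul_le_mul_right _ hij
    obtain ⟨c, w, hcw, -, hlevel, hext⟩ := hline (nonempty_Ico.mpr (by lia))
      (by rw [Nat.card_Ico, Nat.add_sub_cancel_left]; exact Nat.dvd_mul_right M N)
      (nonempty_Ico.mpr (by lia))
      (fun ℓ₀ h₀ ℓ₁ h₁ => by rw [mem_Ico] at h₀ h₁; lia) hcorr
    rw [expect_Ico_wordMean_sub (by rw [mem_Ico] at hlevel; lia) hK] at hext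
    obtain ⟨x, -, hx⟩ := (isMean_wordMean _).exists_le fun x =>
      levelMean (M * N) fun y => iverson (x ++ y ∈ commonExt Q c w)
    obtain ⟨x', -, hx'⟩ := exists_levelMean_mul_le hM N fun y => iverson (x ++ y ∈ commonExt Q c w)
    obtain ⟨V, hV⟩ := hsub {y | x ++ (x' ++ y) ∈ commonExt Q c w} (hext.trans (hx.trans hx'))
    refine ⟨.consLine c w ((WordSubspace.shift (x ++ x')).comp V), fun t ht => ?_⟩
    cases t with
    | nil =>
      rw [WordSubspace.consLine_eval_nil]
      exact hcw.1
    | cons e t =>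
      rw [WordSubspace.consLine_eval_cons]
      simpa [WordSubspace.comp, WordSubspace.shift] using
        hV t (by simpa using ht) e

end Pairs

/-! ### Correlation with insensitive sets -/

section Fibers

variable {β γ : Type u} [Fintype β] [Nonempty β] {R s : ℕ} {B : ℝ}

theorem levelMean_mul_le_levelMean_map [Fintype γ] [Nonempty γ] (ι : γ → β) (hR : 1 ≤ R)
    (hs : 1 ≤ s) {f : List β → ℝ} (hf : ∀ x, |f x| ≤ B) :
    levelMean (s * R) f ≤
      levelMean s (fun t => blocksMean R s fun W => f (substBlocks W (t.map ι))) +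
        s * (Fintype.card β * B / √R) := by
  have hB : 0 ≤ B := (abs_nonneg _).trans (hf [])
  have hblocks := isMean_blocksMean (β := β) hR s
  have hexchange {t t' : List β} (hts : t.length < s) (htt' : t.length = t'.length) :
      blocksMean R s (fun W => f (substBlocks W t)) ≤
        blocksMean R s (fun W => f (substBlocks W t')) + s * (Fintype.card β * B / √R) := by
    have hdiff := (le_abs_self _).trans (abs_blocksMean_sub_le (fun _ => PUnit.unit) hR
      (ε := fun _ => 1) (by simp) hf (t' := t') (by simp only [List.map_const', htt']) hts)
    simp only [one_mul, hblocks.sub] at hdiff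
    have : t.length * (Fintype.card β * B / √R) ≤ s * (Fintype.card β * B / √R) := by gcongr
    linarith
  have hγ := isMean_levelMean (α := γ) hs
  rw [← blocksMean_levelMean hR, hblocks.comm (isMean_levelMean hs), ← hγ.const (s * _), ← hγ.add]
  unfold levelMean
  exact expect_le_expect fun i hi => (isMean_wordMean i).le_const fun t (ht : t.length = i) =>
    (isMean_wordMean i).const_le fun t' (ht' : t'.length = i) =>
      hexchange (by simpa [ht] using hi) (by simp [ht, ht'])

theorem IsDisintegration.mean_levelMean_abs_sub_le {π : β → γ}
    {E : List (List γ × List γ) → (List (List β × List β) → ℝ) → ℝ}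
    (hE : IsDisintegration (blocksMean R s) (mapBlocks π) E) (hR : 1 ≤ R) (hs : 1 ≤ s)
    {f : List β → ℝ} (hf : ∀ x, |f x| ≤ B) {ρ : β → β} (hρ : ∀ b, π (ρ b) = π b) :
    blocksMean R s (fun W => levelMean s fun t => |E (mapBlocks π W) fun W' =>
      f (substBlocks W' t) - f (substBlocks W' (t.map ρ))|) ≤ s * (Fintype.card β * B / √R) := by
  have hB : 0 ≤ B := (abs_nonneg _).trans (hf [])
  rw [(isMean_blocksMean hR s).comm (isMean_levelMean hs)]
  refine (isMean_levelMean hs).le_const fun t (ht : t.length < s) =>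
    (hE.mean_abs_sub_le π hR hf (by simp [hρ]) ht).trans ?_
  gcongr

theorem exists_isMean_mapBlocks_fiber [Fintype γ] [Nonempty γ] {π : β → γ} {ι : γ → β}
    (hπ : ∀ c, π (ι c) = c) (hs : 1 ≤ s) (hB : 0 < B) {η : ℝ} (hη : 0 < η) :
    ∀ᶠ R : ℕ in Filter.atTop, ∀ f g : List β → ℝ, (∀ x, |f x| ≤ B) → (∀ x, |g x| ≤ B) →
      η ≤ levelMean (s * R) f → ∃ (V : List (List γ × List γ))
        (T : (List (List β × List β) → ℝ) → ℝ), IsMean {W | mapBlocks π W = V} T ∧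
        7 * η / 8 ≤ levelMean s (fun t => T fun W => f (substBlocks W (t.map ι))) ∧
        ∀ t, t.length < s →
          |T fun W => g (substBlocks W t) - g (substBlocks W (t.map (ι ∘ π)))| ≤ η / 4 := by
  obtain ⟨C, hC, hCs⟩ := exists_le_mul_levelMean β s
  let c : ℝ := 4 * B * C / η
  have hlim : Filter.Tendsto (fun R : ℕ => s * (Fintype.card β * B / √(R : ℝ)) * (1 + c))
      Filter.atTop (nhds (s * 0 * (1 + c))) :=
    (((Real.tendsto_sqrt_atTop.comp tendsto_natCast_atTop_atTop).const_div_atTop _).const_mul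
      _).mul_const _
  filter_upwards [hlim.eventually_le_const (v := s * 0 * (1 + c)) (u := η / 8) (by simpa using hη),
    Filter.eventually_ge_atTop 1] with R hκ hR f g hf hg hηf
  set κ : ℝ := s * (Fintype.card β * B / √R)
  have hblocks := isMean_blocksMean (β := β) hR s
  obtain ⟨E, hE⟩ := hblocks.exists_disintegration (mapBlocks π)
  let F (W : List (List β × List β)) : ℝ :=
    levelMean s fun t => E (mapBlocks π W) fun W' => f (substBlocks W' (t.map ι))
  let osc (W : List (List β × List β)) (t : List β) : ℝ :=
    |E (mapBlocks π W) fun W' => g (substBlocks W' t) - g (substBlocks W' (t.map (ι ∘ π)))|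
  have hF : η - κ ≤ blocksMean R s F := by
    rw [hblocks.comm (isMean_levelMean hs)]
    simp only [← hE.mean_eq]
    linarith [levelMean_mul_le_levelMean_map ι hR hs hf]
  have hosc : blocksMean R s (fun W => levelMean s (osc W)) ≤ κ :=
    hE.mean_levelMean_abs_sub_le hR hs hg fun b => hπ (π b)
  have hc : 0 < c := by positivity
  obtain ⟨W, -, hFW, hoscW⟩ := hblocks.exists_sub_le_and_mul_le hc.le
    (fun W _ => (isMean_levelMean hs).le_const fun t _ =>
      (hE.isMean W).le_const fun W' _ => (le_abs_self _).trans (hf _))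
    (fun W _ => (isMean_levelMean hs).const_le fun t _ => abs_nonneg _) hF
    (mul_le_mul_of_nonneg_left hosc hc.le)
  refine ⟨mapBlocks π W, E (mapBlocks π W), hE.isMean W, by linarith, fun t ht => ?_⟩
  calc osc W t ≤ C * levelMean s (osc W) := hCs (osc W) (fun _ => abs_nonneg _) t ht
    _ = c * levelMean s (osc W) * η / (4 * B) := by
        simp only [c]
        field_simp
    _ ≤ B * η / (4 * B) := by
        gcongr
        linarith
    _ = η / 4 := by field_simp

end Fibers

theorem IsMean.iverson_substVar_mul {α : Type u} {a : α} {Y : List (List α × List α)}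
    {T : (List (List (Option α) × List (Option α)) → ℝ) → ℝ}
    (hT : IsMean {W | mapBlocks (fun o => o.getD a) W = Y} T) (P : Set (List α))
    (f : List (Option α) → ℝ) (t : List α) :
    T (fun W => iverson (substVar (substBlocks W (t.map some)) a ∈ P) *
      f (substBlocks W (t.map some))) =
      iverson (substBlocks Y t ∈ P) * T fun W => f (substBlocks W (t.map some)) := by
  rw [← hT.const_mul]
  refine hT.congr fun W (hW : mapBlocks _ W = Y) => ?_
  rw [substVar, map_substBlocks, hW]
  simp [Function.comp_def]

section Lift

variable {α : Type u} [Fintype α] [Nonempty α] {B η : ℝ} {m : ℕ}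

theorem DensityLineProperty.exists_subspace_le_levelMean (h : DensityLineProperty α) (a : α)
    (hm : 1 ≤ m) (hB : 0 < B) (hη : 0 < η) :
    ∃ n, 1 ≤ n ∧ m ∣ n ∧ ∀ (P : Set (List α)) (f : List (Option α) → ℝ), (∀ z, |f z| ≤ B) →
      (η ≤ levelMean n fun z => iverson (substVar z a ∈ P) * f z) →
      ∃ V : WordSubspace (Option α), η / 2 ≤ levelMean m fun t => f (V.eval id t) := by
  obtain ⟨s, hs, hsub⟩ := h.exists_subspace m (δ := η / (8 * B)) (by positivity)
  obtain ⟨R₀, hR₀⟩ := Filter.eventually_atTop.mp (exists_isMean_mapBlocks_fiber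
    (π := fun o : Option α => o.getD a) (ι := some) (fun _ => rfl) hs hB hη)
  have hR : 1 ≤ m * (R₀ + 1) := Nat.mul_pos hm R₀.succ_pos
  refine ⟨s * (m * (R₀ + 1)), Nat.mul_pos hs hR, ⟨s * (R₀ + 1), by ring⟩, fun P f hf hP => ?_⟩
  obtain ⟨Y, T, hT, hmean, hosc⟩ := hR₀ (m * (R₀ + 1)) (by nlinarith) _ f
    (fun z => (abs_iverson_mul_le _ _).trans (hf z)) hf hP
  let g (t : List (Option α)) : ℝ := T fun W => f (substBlocks W t)
  let Q : Set (List α) := {t | t.length < s ∧ 3 * η / 4 ≤ g (t.map some)}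
  have hQ : η / (8 * B) ≤ levelMean s fun t => iverson (t ∈ Q) := by
    rw [div_le_iff₀' (by positivity)]
    have hcut (t : List α) (ht : t.length < s) :
        T (fun W => iverson (substVar (substBlocks W (t.map some)) a ∈ P) *
          f (substBlocks W (t.map some))) ≤ 3 * η / 4 + B * iverson (t ∈ Q) := by
      have htQ : t ∈ Q ↔ 3 * η / 4 ≤ g (t.map some) := and_iff_right ht
      rw [hT.iverson_substVar_mul, htQ]
      exact iverson_mul_le_add_mul_iverson _ (by positivity) hB.le
        (hT.le_const fun W _ => (le_abs_self _).trans (hf _))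
    linarith [(isMean_levelMean hs).sub_le_mul_iverson hcut]
  obtain ⟨V, hV⟩ := hsub Q hQ
  have hgV {t : List (Option α)} (ht : t.length < m) : η / 2 ≤ g (V.eval some t) := by
    have hπV : (V.eval some t).map (fun o => o.getD a) = V.eval id (substVar t a) :=
      V.map_eval _ _ _
    have hmem := hV (substVar t a) (by rwa [length_substVar])
    rw [← hπV] at hmem
    have hosct := (abs_le.mp (hosc (V.eval some t) (by simpa using hmem.1))).1
    have hmem2 := hmem.2
    rw [List.map_map] at hmem2
    rw [hT.sub] at hosct
    simp only [g] at hmem2 ⊢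
    linarith
  obtain ⟨W, -, hW⟩ := hT.exists_le fun W => levelMean m fun t => f (substBlocks W (V.eval some t))
  refine ⟨(WordSubspace.ofBlocks W).comp (V.mapConst some), le_trans ?_ (hW.trans_eq ?_)⟩
  · rw [hT.comm (isMean_levelMean hm)]
    exact (isMean_levelMean hm).const_le fun t ht => hgV ht
  · simp only [WordSubspace.comp, WordSubspace.mapConst, WordSubspace.ofBlocks_eval_id]
    rfl

theorem DensityLineProperty.exists_subspace_pos_levelMean (h : DensityLineProperty α) (hm : 1 ≤ m)
    (hB : 0 < B) (l : Finset α) (hη : 0 < η) :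
    ∃ n, 1 ≤ n ∧ m ∣ n ∧ ∀ (P : α → Set (List α)) (f : List (Option α) → ℝ), (∀ z, |f z| ≤ B) →
      (η ≤ levelMean n fun z => (1 - iverson (∀ a ∈ l, substVar z a ∈ P a)) * f z) →
      ∃ V : WordSubspace (Option α), 0 < levelMean m fun t => f (V.eval id t) := by
  classical
  induction l using Finset.induction_on generalizing η with
  | empty =>
    refine ⟨m, hm, dvd_rfl, fun P f _ hf => absurd hf ?_⟩
    simpa [iverson_of_true, (isMean_levelMean hm).const] using hη
  | insert b l _ ih =>
    obtain ⟨n₁, hn₁, hdvd₁, hl⟩ := ih (η := η / 4) (by positivity)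
    obtain ⟨n, hn, hdvd, hlift⟩ := h.exists_subspace_le_levelMean b hn₁ hB (half_pos hη)
    refine ⟨n, hn, hdvd₁.trans hdvd, fun P f hf hP => ?_⟩
    have hsplit (z : List (Option α)) :
        (1 - iverson (∀ a ∈ insert b l, substVar z a ∈ P a)) * f z =
          iverson (substVar z b ∈ (P b)ᶜ) * f z + iverson (substVar z b ∈ P b) *
            ((1 - iverson (∀ a ∈ l, substVar z a ∈ P a)) * f z) := by
      rw [forall_mem_insert, iverson_and, Set.mem_compl_iff, iverson_not]
      ring
    simp only [hsplit, (isMean_levelMean hn).add] at hP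
    rcases le_or_gt (η / 2) (levelMean n fun z => iverson (substVar z b ∈ (P b)ᶜ) * f z)
      with hcompl | hcompl
    · obtain ⟨V, hV⟩ := hlift _ f hf hcompl
      obtain ⟨q, rfl⟩ := hdvd₁
      rw [mul_comm] at hV
      obtain ⟨x, -, hx⟩ := exists_levelMean_mul_le (Nat.pos_of_mul_pos_left hn₁) m
        fun t => f (V.eval id t)
      refine ⟨V.comp (.shift x), ((half_pos (half_pos hη)).trans_le (hV.trans hx)).trans_eq ?_⟩
      simp [WordSubspace.comp, WordSubspace.shift]
    · have hbound (z : List (Option α)) :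
          |(1 - iverson (∀ a ∈ l, substVar z a ∈ P a)) * f z| ≤ B := by
        rw [← iverson_not]
        exact (abs_iverson_mul_le _ _).trans (hf z)
      obtain ⟨V, hV⟩ := hlift (P b) _ hbound (by linarith)
      simp only [V.substVar_eval] at hV
      obtain ⟨V', hV'⟩ := hl (fun a => {y | V.eval (fun o => (id o).getD a) y ∈ P a})
        (fun t => f (V.eval id t)) (fun z => hf _) (hV.trans' (by linarith))
      exact ⟨V.comp V', hV'⟩

end Lift

/-! ### Adding a letter to the alphabet -/

section CriticalDensity

variable {β : Type u} [Fintype β] {d : ℝ}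

/-- The density `d` is the threshold above which sets of words contain a line: line-free sets
attain densities arbitrarily close to `d` at every scale, but at some scale none exceeds `d` by a
given amount. -/
structure IsCriticalDensity (β : Type u) [Fintype β] (d : ℝ) : Prop where
  pos : 0 < d
  exists_not_hasLine : ∀ ε > 0, ∀ N ≥ 1, ∃ A : Set (List β), ¬HasLine A ∧
    d - ε < levelMean N fun x => iverson (x ∈ A)
  exists_levelMean_lt : ∀ ε > 0, ∃ N ≥ 1, ∀ A : Set (List β), ¬HasLine A →
    (levelMean N fun x => iverson (x ∈ A)) < d + ε

variable [Nonempty β]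

theorem exists_isCriticalDensity (h : ¬DensityLineProperty β) : ∃ d, IsCriticalDensity β d := by
  unfold DensityLineProperty at h
  push Not at h
  obtain ⟨δ, hδ, hfree⟩ := h
  let E : Set ℝ := {c | ∀ N ≥ 1, ∃ A : Set (List β), ¬HasLine A ∧
    c ≤ levelMean N fun x => iverson (x ∈ A)}
  have hδE : δ ∈ E := fun N hN => (hfree N hN).imp fun A hA => hA.symm
  have hE : BddAbove E := ⟨1, fun c hc => by
    obtain ⟨A, -, hA⟩ := hc 1 le_rfl
    exact hA.trans ((isMean_levelMean le_rfl).le_const fun x _ => iverson_le_one _)⟩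
  refine ⟨sSup E, hδ.trans_le (le_csSup hE hδE), fun ε hε N hN => ?_, fun ε hε => ?_⟩
  · obtain ⟨c, hc, hlt⟩ := exists_lt_of_lt_csSup ⟨δ, hδE⟩ (sub_lt_self (sSup E) hε)
    exact (hc N hN).imp fun A hA => ⟨hA.1, hlt.trans_le hA.2⟩
  · have hnot : sSup E + ε ∉ E := fun h => (le_csSup hE h).not_gt (lt_add_of_pos_right _ hε)
    simp only [E, Set.mem_ofPred_eq] at hnot
    push Not at hnot
    exact hnot

theorem blocksMean_substBlocks_le {R : ℕ} (hR : 1 ≤ R) {f : List β → ℝ} {C : ℝ}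
    (hf : ∀ y, levelMean R (fun u => f (y ++ u)) ≤ C) {s : ℕ} {t : List β} (ht : t.length < s) :
    blocksMean R s (fun W => f (substBlocks W t)) ≤ C := by
  induction t generalizing s f with
  | nil =>
    have hlevel := wordMean_blocksMean hR ht f
    simp only [List.length_nil, Nat.zero_mul, wordMean_zero] at hlevel
    exact hlevel.trans_le (hf [])
  | cons e t ih =>
    obtain ⟨s, rfl⟩ := Nat.exists_eq_succ_of_ne_zero (Nat.ne_zero_of_lt ht)
    refine (isMean_blockMean hR).le_const fun p _ => ?_
    refine ih (f := fun z => f (p.1 ++ e :: (p.2 ++ z))) (fun y => ?_) (by simpa using ht)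
    simpa using hf (p.1 ++ e :: (p.2 ++ y))

/-- A random restriction of a line-free set of nearly critical density. No word can have a
probability much above `d`, since shifts are line-free, and the average over words is about `d`. -/
theorem IsCriticalDensity.exists_isMean (h : IsCriticalDensity β d) {s : ℕ} (hs : 1 ≤ s) {η : ℝ}
    (hη : 0 < η) : ∃ T, IsMean {A : Set (List β) | ¬HasLine A} T ∧
      ∀ t : List β, t.length < s → d - η ≤ T fun A => iverson (t ∈ A) := by
  obtain ⟨C, hC, hpoint⟩ := exists_le_mul_levelMean β s
  set ε := η / (2 * C) with hε
  obtain ⟨R, hR, hupper⟩ := h.exists_levelMean_lt ε (by positivity)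
  obtain ⟨A, hA, hlower⟩ :=
    h.exists_not_hasLine ε (by positivity) (s * R) (Nat.mul_pos hs hR)
  have hblocks := isMean_blocksMean (β := β) hR s
  refine ⟨fun f => blocksMean R s fun W => f {t | substBlocks W t ∈ A},
    hblocks.bind (fun _ _ => IsMean.pure ())
      (fun W _ => {t | substBlocks W t ∈ A}) fun W _ _ _ hW => hA ?_, fun t ht => ?_⟩
  · simp only [← WordSubspace.ofBlocks_eval_id] at hW
    exact WordSubspace.hasLine_of_preimage _ hW
  let q (t : List β) : ℝ := blocksMean R s fun W => iverson (substBlocks W t ∈ A)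
  have hq : ∀ t : List β, t.length < s → q t ≤ d + ε := fun t ht =>
    blocksMean_substBlocks_le hR (f := fun x => iverson (x ∈ A))
      (fun y => (hupper {u | y ++ u ∈ A} fun hy => hA (hy.of_append y)).le) ht
  have hmean : d - ε < levelMean s q := by
    rwa [← blocksMean_levelMean hR s fun x => iverson (x ∈ A),
      hblocks.comm (isMean_levelMean hs)] at hlower
  have hdeficit : levelMean s (fun t => max 0 (d + ε - q t)) ≤ 2 * ε := by
    rw [(isMean_levelMean hs).congr fun t ht => max_eq_right (sub_nonneg.mpr (hq t ht)),
      (isMean_levelMean hs).sub, (isMean_levelMean hs).const]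
    linarith
  have hCε : C * (2 * ε) = η := by rw [hε]; field_simp
  have hmax := (le_max_right 0 (d + ε - q t)).trans
    ((hpoint (fun t => max 0 (d + ε - q t)) (fun _ => le_max_left _ _) t ht).trans
      (mul_le_mul_of_nonneg_left hdeficit hC.le))
  have hεpos : 0 < ε := by positivity
  change d - η ≤ q t
  linarith

end CriticalDensity

theorem hasLine_of_lineIn_map_some {α : Type u} {A : Set (List (Option α))} {z : List (Option α)}
    (φ : WordSubspace α) (h : LineIn [] z {t | (φ.eval id t).map some ∈ A})
    (hz : φ.eval some (none :: z) ∈ A) : HasLine A := by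
  have hsome {t : List α} (ht : (φ.eval id t).map some ∈ A) : φ.eval some (t.map some) ∈ A :=
    φ.map_eval some id t ▸ ht
  refine (φ.mapConst some).hasLine_of_preimage ⟨[], z.map (Option.map some), ?_, fun o => ?_⟩
  · exact hsome h.1
  · cases o with
    | none =>
      have hnone : substVar (z.map (Option.map some)) none = z := by
        rw [substVar, List.map_map]
        exact (List.map_congr_left fun o _ => by cases o <;> rfl).trans (List.map_id z)
      rw [linePoint, hnone]
      exact hz
    | some a =>
      have hsub : substVar (z.map (Option.map some)) (some a) = (substVar z a).map some := by
        rw [substVar, substVar, List.map_map, List.map_map]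
        exact List.map_congr_left fun o _ => by cases o <;> rfl
      rw [linePoint, hsub]
      exact hsome (h.2 a)

section Step

variable {α : Type u} [Fintype α] [Nonempty α]

theorem exists_subspace_lines_or_no_lines (α : Type u) [Finite α] (m M : ℕ) :
    ∃ n, ∀ {X : Type u} (T : (X → ℝ) → ℝ) (B : X → Set (List α)) (θ : ℝ), ∃ φ : WordSubspace α,
      (φ.LengthLT (m + 1) n ∧ ∀ z : List (Option α), z.length < m →
        θ ≤ T fun x => iverson (LineIn [] z {t | φ.eval id t ∈ B x})) ∨
      (φ.LengthLT M n ∧ ∀ (c : List α) (w : List (Option α)), c.length + (w.length + 1) < M →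
        (T fun x => iverson (LineIn c w {t | φ.eval id t ∈ B x})) < θ) := by
  obtain ⟨n, hn⟩ := exists_subspace_captures_or_avoids α m M PUnit
  refine ⟨n, fun {X} T B θ => ?_⟩
  obtain ⟨φ, hφ⟩ := hn fun _ => {x | ∃ c w, x = c.map some ++ none :: w ∧
    θ ≤ T fun x => iverson (LineIn c w (B x))}
  have hG (c : List α) (w : List (Option α)) :
      (∃ c' w', φ.eval some (c.map some ++ none :: w) = c'.map some ++ none :: w' ∧
        θ ≤ T fun x => iverson (LineIn c' w' (B x))) ↔
      θ ≤ T fun x => iverson (LineIn c w {t | φ.eval id t ∈ B x}) := by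
    obtain ⟨s, hs, hpoint⟩ := φ.exists_eval_append_none_cons c w
    simp only [LineIn, Set.mem_ofPred_eq, hpoint, hs]
    constructor
    · rintro ⟨c', w', heq, hθ⟩
      obtain ⟨rfl, rfl⟩ := map_some_append_none_cons_inj.mp heq
      exact hθ
    · exact fun hθ => ⟨_, s, rfl, hθ⟩
  refine ⟨φ, hφ.imp (fun h => ⟨h.1, fun z hz => ?_⟩) fun h => ⟨h.1, fun c w hcw => ?_⟩⟩
  · obtain ⟨-, hz⟩ := h.2.imp fun _ h' => h' z hz
    exact (hG [] z).mp hz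
  · rw [← not_le, ← hG]
    exact h.2 ⟨⟩ (c.map some ++ none :: w) (by simpa using hcw) (by simp)

theorem DensityLineProperty.exists_subspace_common_lines (h : DensityLineProperty α) {η : ℝ}
    (hη : 0 < η) : ∃ θ : ℝ, 0 < θ ∧ θ ≤ 1 ∧ ∀ m, ∃ n, ∀ {X : Type u} {S : Set X}
      {T : (X → ℝ) → ℝ}, IsMean S T → ∀ B : X → Set (List α),
      (∀ t : List α, t.length < n → η ≤ T fun x => iverson (t ∈ B x)) →
      ∃ φ : WordSubspace α, φ.LengthLT (m + 1) n ∧ ∀ z : List (Option α), z.length < m →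
        θ ≤ T fun x => iverson (LineIn [] z {t | φ.eval id t ∈ B x}) := by
  obtain ⟨M, hM, θ, hθ, hline⟩ := h.exists_common_line hη
  refine ⟨min θ 1, by positivity, min_le_right _ _, fun m => ?_⟩
  obtain ⟨n, hn⟩ := exists_subspace_lines_or_no_lines α m M
  refine ⟨n, fun {X S T} hT B hB => ?_⟩
  obtain ⟨φ, hlines | ⟨hφ, hno⟩⟩ := hn T B (min θ 1)
  · exact ⟨φ, hlines⟩
  · obtain ⟨c, w, hcw, hθcw⟩ := hline hT (fun x => {t | φ.eval id t ∈ B x}) <| by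
      rw [hT.comm (isMean_levelMean hM)]
      exact (isMean_levelMean hM).const_le fun t ht => hB _ (hφ id t ht)
    exact absurd ((min_le_left _ _).trans hθcw) (hno c w hcw).not_ge

theorem IsMean.exists_le_levelMean_increment {T : (Set (List (Option α)) → ℝ) → ℝ}
    (hT : IsMean {A | ¬HasLine A} T) (φ : WordSubspace α) {m : ℕ} (hm : 1 ≤ m) {a b θ : ℝ}
    (hb : 0 ≤ b)
    (hpoint : ∀ z, z.length < m → a ≤ T fun A => iverson (φ.eval some (none :: z) ∈ A))
    (hline : ∀ z, z.length < m →
      θ ≤ T fun A => iverson (LineIn [] z {t | (φ.eval id t).map some ∈ A})) :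
    ∃ A, ¬HasLine A ∧ a - b + b * θ ≤ levelMean m fun z =>
      (1 - iverson (LineIn [] z {t | (φ.eval id t).map some ∈ A})) *
        (iverson (φ.eval some (none :: z) ∈ A) - b) := by
  let F (A : Set (List (Option α))) (z : List (Option α)) : ℝ :=
    (1 - iverson (LineIn [] z {t | (φ.eval id t).map some ∈ A})) *
      (iverson (φ.eval some (none :: z) ∈ A) - b)
  have hF (z : List (Option α)) : T (fun A => F A z) =
      T (fun A => iverson (φ.eval some (none :: z) ∈ A)) - b +
        b * T fun A => iverson (LineIn [] z {t | (φ.eval id t).map some ∈ A}) := by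
    rw [← hT.const b, ← hT.sub, hT.const, ← hT.const_mul, ← hT.add]
    refine hT.congr fun A hA => ?_
    by_cases hz : LineIn [] z {t | (φ.eval id t).map some ∈ A}
    · have hnot : φ.eval some (none :: z) ∉ A := fun h => hA (hasLine_of_lineIn_map_some φ hz h)
      simp [F, iverson_of_true hz, iverson_of_false hnot]
    · simp [F, iverson_of_false hz]
  obtain ⟨A, hA, hle⟩ := hT.exists_le fun A => levelMean m (F A)
  refine ⟨A, hA, le_trans ?_ hle⟩
  rw [hT.comm (isMean_levelMean hm)]
  refine (isMean_levelMean hm).const_le fun z hz => ?_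
  rw [hF]
  have := mul_le_mul_of_nonneg_left (hline z hz) hb
  linarith [hpoint z hz]

theorem DensityLineProperty.option (h : DensityLineProperty α) :
    DensityLineProperty (Option α) := by
  by_contra hcon
  obtain ⟨d, hd⟩ := exists_isCriticalDensity hcon
  have hd0 : 0 < d := hd.pos
  obtain ⟨θ, hθ, hθ1, hcommon⟩ := h.exists_subspace_common_lines (half_pos hd0)
  have hdθ : 0 < d * θ := mul_pos hd0 hθ
  have hdθ' : d * θ ≤ d := mul_le_of_le_one_right hd0.le hθ1
  set b := d + d * θ / 8 with hb
  obtain ⟨k, hk, hupper⟩ := hd.exists_levelMean_lt (d * θ / 8) (by positivity)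
  obtain ⟨m, hm, -, hinc⟩ := h.exists_subspace_pos_levelMean hk (B := 1 + b) (by positivity) univ
    (half_pos hdθ)
  obtain ⟨n, hn⟩ := hcommon m
  obtain ⟨T, hT, hTd⟩ := hd.exists_isMean (s := n + 1) (by lia) (η := d * θ / 8) (by positivity)
  obtain ⟨φ, hφ, hlines⟩ := hn hT (fun A => {t | t.map some ∈ A}) fun t ht =>
    (hTd _ (by simpa using ht.le)).trans' (by linarith)
  obtain ⟨A, hA, hAinc⟩ := hT.exists_le_levelMean_increment φ hm (b := b) (by positivity)
    (fun z hz => hTd _ ((hφ some (none :: z) (by simpa using hz)).trans_le n.le_succ)) hlines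
  let P (a : α) : Set (List α) :=
    {y | (φ.eval id []).map some ∈ A ∧ (φ.eval id (a :: y)).map some ∈ A}
  have hP (z : List (Option α)) : LineIn [] z {t | (φ.eval id t).map some ∈ A} ↔
      ∀ a ∈ univ, substVar z a ∈ P a := by
    simp [LineIn, P, linePoint, forall_and]
  simp only [hP] at hAinc
  obtain ⟨V, hV⟩ := hinc P (fun z => iverson (φ.eval some (none :: z) ∈ A) - b) (fun z => by
    have := iverson_nonneg (φ.eval some (none :: z) ∈ A)
    have := iverson_le_one (φ.eval some (none :: z) ∈ A)
    rw [abs_le]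
    constructor <;> linarith) (hAinc.trans' (by nlinarith))
  rw [(isMean_levelMean hk).sub, (isMean_levelMean hk).const] at hV
  refine absurd (hupper {t | φ.eval some (none :: V.eval id t) ∈ A} fun hline => hA ?_)
    (sub_pos.mp hV).le.not_gt
  exact ((φ.mapConst some).comp ((WordSubspace.shift [none]).comp V)).hasLine_of_preimage hline

end Step

/-! ### Arbitrary finite alphabets -/

section Alphabets

variable {α β : Type u}

theorem map_linePoint (e : α ≃ β) (c : List α) (w : List (Option α)) (a : α) :
    (linePoint c w a).map e = linePoint (c.map e) (w.map (Option.map e)) (e a) := by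
  simp [linePoint, substVar, Option.getD_map]

theorem hasLine_of_replicate_mem [Subsingleton α] {A : Set (List α)} {a : α} {i j : ℕ}
    (hij : i < j) (hi : List.replicate i a ∈ A) (hj : List.replicate j a ∈ A) : HasLine A := by
  refine ⟨List.replicate i a, List.replicate (j - i - 1) none, hi, fun b => ?_⟩
  have hline : linePoint (List.replicate i a) (List.replicate (j - i - 1) none) b =
      List.replicate j a := by
    refine List.eq_replicate_iff.mpr ⟨?_, fun _ _ => Subsingleton.elim _ _⟩
    rw [length_linePoint, List.length_replicate, List.length_replicate]
    lia
  rwa [hline]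

variable [Fintype α] [Fintype β]

theorem wordMean_map (e : α ≃ β) (n : ℕ) (f : List β → ℝ) :
    wordMean n (fun x => f (x.map e)) = wordMean n f := by
  induction n generalizing f with
  | zero => rfl
  | succ n ih =>
    exact Fintype.expect_equiv e _ _ fun a => ih fun x => f (e a :: x)

theorem DensityLineProperty.of_equiv (h : DensityLineProperty α) (e : α ≃ β) :
    DensityLineProperty β := by
  intro δ hδ
  obtain ⟨N, hN, hline⟩ := h δ hδ
  refine ⟨N, hN, fun A hA => ?_⟩
  have hmean : levelMean N (fun x : List α => iverson (x.map e ∈ A)) =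
      levelMean N fun x => iverson (x ∈ A) :=
    expect_congr rfl fun ℓ _ => wordMean_map e ℓ fun x => iverson (x ∈ A)
  obtain ⟨c, w, hc, hw⟩ := hline {x | x.map e ∈ A} (hA.trans_eq hmean.symm)
  refine ⟨c.map e, w.map (Option.map e), hc, fun b => ?_⟩
  have hb : (linePoint c w (e.symm b)).map e ∈ A := hw _
  rwa [map_linePoint, e.apply_symm_apply] at hb

theorem densityLineProperty_of_subsingleton [Subsingleton α] [Nonempty α] :
    DensityLineProperty α := by
  intro δ hδ
  let a := Classical.arbitrary α
  obtain ⟨q, hq0, hq⟩ := exists_two_lt_sq_mul hδ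
  refine ⟨q, hq0, fun A hA => ?_⟩
  have hword (ℓ : ℕ) : wordMean ℓ (fun x : List α => iverson (x ∈ A)) =
      iverson (List.replicate ℓ a ∈ A) :=
    (isMean_wordMean ℓ).eq_const fun x hx => by
      rw [List.eq_replicate_iff.mpr ⟨hx, fun b _ => Subsingleton.elim b a⟩]
  obtain ⟨i, j, hij, -, hcorr⟩ := (IsMean.pure ()).exists_lt_le_mul
    (a := fun ℓ _ => iverson (List.replicate ℓ a ∈ A)) (fun _ _ => iverson_nonneg _)
    (fun _ _ => iverson_le_one _) hδ.le hq (hA.trans_eq (expect_congr rfl fun ℓ _ => hword ℓ))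
  rw [← iverson_and] at hcorr
  obtain ⟨hi, hj⟩ := of_iverson_pos (lt_of_lt_of_le (by positivity) hcorr)
  exact hasLine_of_replicate_mem hij hi hj

theorem densityLineProperty (α : Type u) [Fintype α] [Nonempty α] : DensityLineProperty α := by
  suffices h : Nonempty α → DensityLineProperty α from h ‹_›
  refine Fintype.induction_empty_option
    (P := fun α _ => Nonempty α → DensityLineProperty α) ?_ ?_ ?_ α
  · intro α β _ e h hβ
    let := Fintype.ofEquiv β e.symm
    exact (h (e.nonempty_congr.mpr hβ)).of_equiv e
  · exact fun h => h.elim PEmpty.elim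
  · intro α _ h _
    cases isEmpty_or_nonempty α with
    | inl _ => exact densityLineProperty_of_subsingleton
    | inr hα => exact (h hα).option

end Alphabets

/-! ### The density dichotomy -/

theorem wordMean_eq_expect_ofFn {α : Type*} [Fintype α] (n : ℕ) (f : List α → ℝ) :
    wordMean n f = 𝔼 v : Fin n → α, f (List.ofFn v) := by
  induction n generalizing f with
  | zero => simp [wordMean_zero]
  | succ n ih =>
    simp only [wordMean_succ, ih, ← expect_product']
    refine Fintype.expect_equiv (Fin.consEquiv fun _ => α) _ _ fun v => ?_
    simp [Fin.consEquiv, List.ofFn_succ]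

theorem wordMean_iverson_mem {α : Type*} [Fintype α] (n : ℕ) (A : Set (List α)) :
    wordMean n (fun x => iverson (x ∈ A)) =
      (Set.ncard {x ∈ A | x.length = n} : ℝ) / (Fintype.card α : ℝ) ^ n := by
  classical
  have himage : {x ∈ A | x.length = n} = (List.ofFn : (Fin n → α) → List α) ''
      {v | List.ofFn v ∈ A} := by
    ext x
    constructor
    · rintro ⟨hx, rfl⟩
      exact ⟨x.get, by simpa using hx, List.ofFn_get x⟩
    · rintro ⟨v, hv, rfl⟩
      exact ⟨hv, List.length_ofFn⟩
  rw [himage, Set.ncard_image_of_injective _ List.ofFn_injective, Set.ncard_eq_toFinset_card',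
    wordMean_eq_expect_ofFn, expect_eq_sum_div_card]
  simp [iverson, sum_boole]

theorem dens_eq_wordMean (k n : ℕ) (A : Set (Word k)) :
    _root_.dens k n A = wordMean n fun x => iverson (x ∈ A) := by
  rw [wordMean_iverson_mem, Fintype.card_fin, _root_.dens]

theorem le_card_filter_of_add_div_le_expect {ι : Type*} {L : Finset ι} (hL : L.Nonempty)
    {f : ι → ℝ} (hf : ∀ i ∈ L, f i ≤ 1) {b : ℝ} (hb : 0 ≤ b) {n : ℕ}
    (hn : b + n / #L ≤ 𝔼 i ∈ L, f i) : n ≤ #{i ∈ L | b ≤ f i} := by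
  have hsplit (i : ι) (hi : i ∈ L) : f i ≤ b + if b ≤ f i then 1 else 0 := by
    have := hf i hi
    split_ifs <;> linarith
  have hmarkov : 𝔼 i ∈ L, f i ≤ b + #{i ∈ L | b ≤ f i} / #L :=
    (expect_le_expect hsplit).trans_eq <| by
      rw [expect_add_distrib, expect_const hL, expect_eq_sum_div_card, sum_boole]
  have hcard : (0 : ℝ) < #L := by exact_mod_cast hL.card_pos
  have := (div_le_div_iff_of_pos_right hcard).mp (le_of_add_le_add_left (hn.trans hmarkov))
  exact_mod_cast this

theorem IsMean.sub_le_mean_iverson_mul {X : Type*} {S : Set X} {T : (X → ℝ) → ℝ} (h : IsMean S T)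
    {f : X → ℝ} {C : ℝ} (hf : ∀ x ∈ S, f x ≤ C) (P : X → Prop) :
    T f - C * (1 - T fun x => iverson (P x)) ≤ T fun x => iverson (P x) * f x := by
  rw [← h.const 1, ← h.sub, ← h.const_mul, ← h.sub]
  refine h.mono fun x hx => ?_
  by_cases hP : P x
  · simp [iverson_of_true hP]
  · simpa [iverson_of_false hP] using hf x hx

section Dichotomy

variable {α : Type u} [Fintype α] [Nonempty α] {L₀ L₁ : Finset ℕ} {A : Set (List α)} {δ : ℝ}

theorem sub_le_expect_pairCorr (hL₀ : L₀.Nonempty) (hL₁ : L₁.Nonempty)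
    (hle : ∀ ℓ₀ ∈ L₀, ∀ ℓ₁ ∈ L₁, ℓ₀ ≤ ℓ₁)
    (hA₀ : ∀ ℓ ∈ L₀, δ ≤ wordMean ℓ fun x => iverson (x ∈ A))
    (hA₁ : ∀ ℓ ∈ L₁, δ ≤ wordMean ℓ fun x => iverson (x ∈ A)) {C : ℝ} (hC : 0 ≤ C)
    (hAC : ∀ p : List α, p.length ∈ L₀ →
      𝔼 ℓ ∈ L₁, wordMean (ℓ - p.length) (fun s => iverson (p ++ s ∈ A)) ≤ C) :
    δ - C * (1 - δ) ≤ 𝔼 ℓ₁ ∈ L₁, 𝔼 ℓ₀ ∈ L₀, pairCorr A ℓ₀ ℓ₁ := by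
  rw [expect_comm]
  refine (IsMean.expect L₀ hL₀).const_le fun ℓ₀ h₀ => ?_
  have hword : IsMean {p : List α | p.length = ℓ₀} (wordMean ℓ₀) := isMean_wordMean ℓ₀
  let f (p : List α) : ℝ := 𝔼 ℓ₁ ∈ L₁, wordMean (ℓ₁ - ℓ₀) fun s => iverson (p ++ s ∈ A)
  have hf : δ ≤ wordMean ℓ₀ f := by
    rw [hword.comm (IsMean.expect L₁ hL₁)]
    refine (IsMean.expect L₁ hL₁).const_le fun ℓ₁ h₁ => ?_
    rw [← wordMean_add ℓ₀ (ℓ₁ - ℓ₀) fun x => iverson (x ∈ A), Nat.add_sub_cancel' (hle _ h₀ _ h₁)]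
    exact hA₁ ℓ₁ h₁
  calc δ - C * (1 - δ)
      ≤ wordMean ℓ₀ f - C * (1 - wordMean ℓ₀ fun p => iverson (p ∈ A)) := by
        gcongr
        exact hA₀ ℓ₀ h₀
    _ ≤ wordMean ℓ₀ fun p => iverson (p ∈ A) * f p :=
        hword.sub_le_mean_iverson_mul (fun p hp => by subst hp; exact hAC p h₀) _
    _ = 𝔼 ℓ₁ ∈ L₁, pairCorr A ℓ₀ ℓ₁ := by
        simp only [f, pairCorr, mul_expect, iverson_and, (isMean_wordMean _).const_mul]
        exact hword.comm (IsMean.expect L₁ hL₁) _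

theorem exists_extensions_or_half_sq_le_expect_pairCorr (hδ : 0 < δ) (hL₀ : L₀.Nonempty)
    (hL₁ : L₁.Nonempty) (hle : ∀ ℓ₀ ∈ L₀, ∀ ℓ₁ ∈ L₁, ℓ₀ ≤ ℓ₁)
    (hA₀ : ∀ ℓ ∈ L₀, δ ≤ wordMean ℓ fun x => iverson (x ∈ A))
    (hA₁ : ∀ ℓ ∈ L₁, δ ≤ wordMean ℓ fun x => iverson (x ∈ A)) {n : ℕ}
    (hn : (n : ℝ) / #L₁ ≤ δ ^ 2 / 16) :
    (∃ p : List α, p.length ∈ L₀ ∧ n ≤ #{ℓ ∈ L₁ | δ + δ ^ 2 / 8 ≤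
        wordMean (ℓ - p.length) fun s => iverson (p ++ s ∈ A)}) ∨
      δ ^ 2 / 2 ≤ 𝔼 ℓ₁ ∈ L₁, 𝔼 ℓ₀ ∈ L₀, pairCorr A ℓ₀ ℓ₁ := by
  refine or_iff_not_imp_left.mpr fun hfew => ?_
  push Not at hfew
  have hmean (p : List α) (hp : p.length ∈ L₀) :
      𝔼 ℓ ∈ L₁, wordMean (ℓ - p.length) (fun s => iverson (p ++ s ∈ A)) ≤
        δ + 3 * δ ^ 2 / 16 := by
    by_contra! hlt
    exact (hfew p hp).not_ge (le_card_filter_of_add_div_le_expect hL₁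
      (fun ℓ _ => (isMean_wordMean _).le_const fun s _ => iverson_le_one _)
      (by positivity) (by linarith))
  calc δ ^ 2 / 2 ≤ δ - (δ + 3 * δ ^ 2 / 16) * (1 - δ) := by
        linarith [pow_pos hδ 2, pow_pos hδ 3]
    _ ≤ _ := sub_le_expect_pairCorr hL₀ hL₁ hle hA₀ hA₁ (by positivity) hmean

variable (α) in
theorem exists_density_dichotomy (hδ : 0 < δ) :
    ∃ (Λ : ℕ) (Θ : ℝ), 1 ≤ Λ ∧ 0 < Θ ∧ Θ ≤ δ ^ 2 / 8 ∧
      ∀ {L₀ L₁ : Finset ℕ}, #L₀ = Λ → L₁.Nonempty → (∀ ℓ₀ ∈ L₀, ∀ ℓ₁ ∈ L₁, ℓ₀ ≤ ℓ₁) →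
      ∀ {A : Set (List α)}, (∀ ℓ ∈ L₀, δ ≤ wordMean ℓ fun x => iverson (x ∈ A)) →
      (∀ ℓ ∈ L₁, δ ≤ wordMean ℓ fun x => iverson (x ∈ A)) →
      ∀ {n : ℕ}, 2 / Θ * n ≤ #L₁ →
        (∃ p : List α, p.length ∈ L₀ ∧ n ≤ #{ℓ ∈ L₁ | δ + δ ^ 2 / 8 ≤
          wordMean (ℓ - p.length) fun s => iverson (p ++ s ∈ A)}) ∨
        ∃ c w, LineIn c w A ∧ c.length ∈ L₀ ∧ c.length + (w.length + 1) ∈ L₀ ∧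
          n ≤ #{ℓ ∈ L₁ | Θ / 2 ≤ wordMean (ℓ - (c.length + (w.length + 1))) fun s =>
            iverson (s ∈ commonExt A c w)} := by
  obtain ⟨M, hM, θ, hθ, hline⟩ :=
    (densityLineProperty α).exists_lineIn_of_le_pairCorr (η := δ ^ 2 / 2) (by positivity)
  have hΘ : 0 < min θ (δ ^ 2 / 8) := lt_min hθ (by positivity)
  refine ⟨M, min θ (δ ^ 2 / 8), hM, hΘ, min_le_right _ _,
    fun {L₀ L₁} hL₀ hL₁ hle {A} hA₀ hA₁ {n} hn => ?_⟩
  have hL₀' : L₀.Nonempty := card_pos.mp (by lia)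
  have hfrac : (n : ℝ) / #L₁ ≤ min θ (δ ^ 2 / 8) / 2 := by
    have hcard : (0 : ℝ) < #L₁ := by exact_mod_cast hL₁.card_pos
    rw [div_mul_eq_mul_div, div_le_iff₀ hΘ] at hn
    rw [div_le_iff₀ hcard]
    linarith
  refine (exists_extensions_or_half_sq_le_expect_pairCorr hδ hL₀' hL₁ hle hA₀ hA₁
    (by linarith [min_le_right θ (δ ^ 2 / 8)])).imp_right fun hcorr => ?_
  obtain ⟨c, w, hcw, hc, hw, hext⟩ := hline hL₀' hL₀.symm.dvd hL₁ hle hcorr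
  exact ⟨c, w, hcw, hc, hw, le_card_filter_of_add_div_le_expect hL₁
    (fun ℓ _ => (isMean_wordMean _).le_const fun s _ => iverson_le_one _)
    (by positivity) (by linarith [min_le_left θ (δ ^ 2 / 8)])⟩

end Dichotomy

end CarlsonSimpson

/-- Proposition 7.5 (with the numerical invariants `Λ₀`, `Θ₀` abstracted):
either the density of `A` increments on a long shifted set of levels, or one finds a
Carlson–Simpson line `V = {c} ∪ {c ⌢ w(a) : a ∈ [k]}` inside `A` with level set
`{|c|, |c| + |w|} ⊆ L₀` whose top level has many common extensions into `A`. -/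
theorem density_dichotomy (k : ℕ) (hk : 2 ≤ k) (δ : ℝ) (hδ0 : 0 < δ) (hδ1 : δ ≤ 1) :
    ∃ (Λ₀ : ℕ) (Θ₀ : ℝ), 1 ≤ Λ₀ ∧ 0 < Θ₀ ∧ Θ₀ ≤ δ ^ 2 / 8 ∧
      ∀ L : Finset ℕ, L.Nonempty → ∀ A : Set (Word k), (∀ ℓ ∈ L, δ ≤ dens k ℓ A) →
        ∀ n : ℕ, 1 ≤ n → Λ₀ + ⌈2 / Θ₀ * (n : ℝ)⌉₊ ≤ L.card →
        ∀ L₀ : Finset ℕ, L₀ ⊆ L → L₀.card = Λ₀ →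
          (∀ x ∈ L₀, ∀ y ∈ L \ L₀, x < y) →
          ((∃ L' ⊆ L \ L₀, n ≤ L'.card ∧ ∃ ℓ₀ ∈ L₀, ∃ t₀ : Word k, t₀.length = ℓ₀ ∧
              ∀ ℓ ∈ L', δ + δ ^ 2 / 8 ≤ dens k (ℓ - ℓ₀) {s | t₀ ++ s ∈ A}) ∨
            (∃ L'' ⊆ L \ L₀, n ≤ L''.card ∧ ∃ (c : Word k) (w : VWord k),
              IsLeftVar w ∧
              insert c {x | ∃ a : Fin k, x = c ++ subst w a} ⊆ A ∧
              c.length ∈ L₀ ∧ c.length + w.length ∈ L₀ ∧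
              ∀ ℓ ∈ L'', Θ₀ / 2 ≤ dens k (ℓ - (c.length + w.length))
                {s | ∀ a : Fin k, c ++ subst w a ++ s ∈ A})) := by
  have : NeZero k := ⟨by lia⟩
  obtain ⟨Λ₀, Θ₀, hΛ₀, hΘ₀, hΘδ, hdich⟩ :=
    CarlsonSimpson.exists_density_dichotomy (Fin k) hδ0
  refine ⟨Λ₀, Θ₀, hΛ₀, hΘ₀, hΘδ, fun L _ A hA n hn hcard L₀ hL₀ hL₀card hlt => ?_⟩
  simp only [CarlsonSimpson.dens_eq_wordMean] at hA ⊢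
  have hn' : 2 / Θ₀ * (n : ℝ) ≤ (L \ L₀).card := by
    rw [Finset.card_sdiff_of_subset hL₀, hL₀card]
    exact Nat.ceil_le.mp (by lia)
  have hne : (L \ L₀).Nonempty :=
    Finset.card_pos.mp (Nat.cast_pos.mp (lt_of_lt_of_le (by positivity) hn'))
  rcases hdich hL₀card hne (fun x hx y hy => (hlt x hx y hy).le) (fun ℓ hℓ => hA ℓ (hL₀ hℓ))
    (fun ℓ hℓ => hA ℓ (Finset.sdiff_subset hℓ)) hn' with
    ⟨t₀, ht₀, hmany⟩ | ⟨c, w, ⟨hc, hw⟩, hc₀, hw₀, hmany⟩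
  · exact .inl ⟨_, Finset.filter_subset _ _, hmany, _, ht₀, t₀, rfl,
      fun ℓ hℓ => (Finset.mem_filter.mp hℓ).2⟩
  · refine .inr ⟨_, Finset.filter_subset _ _, hmany, c, none :: w, rfl,
      Set.insert_subset hc ?_, hc₀, hw₀, fun ℓ hℓ => (Finset.mem_filter.mp hℓ).2⟩
    rintro _ ⟨a, rfl⟩
    exact hw a
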